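/- Let (X,T) be a topological dynamical system given by a continuous ℤ^d-action on a compact metric space and let μ be an ergodic T-invariant Borel probability measure. The following are equivalent: (1) (X,T) is μ-mean equicontinuous; (2) (X,T) is μ-1_B-mean equicontinuous for every Borel set B ⊆ X; (3) (X,T) is μ-f-mean equicontinuous for every f ∈ L²(X,μ); (4) (X,μ,T) has discrete spectrum. -/

import Mathlib

/-!
Both notions of mean equicontinuity say that the upper mean of a kernel `E` along the orbit of a
pair of points is small near the diagonal, off a set of small measure: `E = d` for `d_b`, and
`E(a, b) = |f a - f b|` for `ρ_f`, by Chebyshev's inequality.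

Equicontinuity gives discrete spectrum. Let `f` be bounded. By ergodicity the mean of
`|f (T^i ·) - f (T^j ·)|` along almost every orbit is at least its integral, so the translates of
`f` by `i` and `j` are close in `L²` as soon as `T^i x` and `T^j x` both lie in a fixed set of
positive measure on which the kernel mean is small. Only finitely many translates can avoid this
pairwise, so the orbit of `f` under the Koopman representation is totally bounded. The closed convex
hull of the rank one operators of the orbit is then compact and, by Markov–Kakutani, contains an
operator commuting with the representation. It is nonzero, compact and self-adjoint, so it has a
finite-dimensional eigenspace, which contains a joint eigenvector. Such `f` being total in `L²`, a
maximal orthonormal set of joint eigenvectors is a basis.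

Discrete spectrum gives equicontinuity. If `g` is an eigenfunction, `|g(x) - g(y)|` is constant
along orbits, and `g` is close to a continuous function off a set of small measure. Finite
combinations of eigenfunctions approximate any `f ∈ L²` in `L¹`, and the maximal inequality makes
the orbit means of the error small off a set of small measure.
-/

open MeasureTheory Filter Finset Metric
open scoped Classical

noncomputable section

/-- The box `{0,…,n−1}^d` inside `ℤ^d`. -/
def Fbox (d n : ℕ) : Finset (Fin d → ℤ) :=
  Fintype.piFinset fun _ => Finset.Icc (0 : ℤ) ((n : ℤ) - 1)

/-- Upper density of a subset of `ℤ^d` along the boxes `F_n`. -/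
def upperDensity (d : ℕ) (S : Set (Fin d → ℤ)) : ℝ :=
  Filter.limsup
    (fun n : ℕ => (((Fbox d n).filter (fun j => j ∈ S)).card : ℝ) / ((Fbox d n).card : ℝ))
    Filter.atTop

/-- Lower density of a subset of `ℤ^d` along the boxes `F_n`. -/
def lowerDensity (d : ℕ) (S : Set (Fin d → ℤ)) : ℝ :=
  Filter.liminf
    (fun n : ℕ => (((Fbox d n).filter (fun j => j ∈ S)).card : ℝ) / ((Fbox d n).card : ℝ))
    Filter.atTop

variable {X : Type*}

/-- The Besicovitch pseudometric `d_b(x,y) = limsup_n (1/|F_n|) Σ_{j∈F_n} d(T^j x, T^j y)`. -/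
def dB {d : ℕ} [PseudoMetricSpace X] (T : (Fin d → ℤ) → X → X) (x y : X) : ℝ :=
  Filter.limsup (fun n : ℕ =>
    (∑ j ∈ Fbox d n, dist (T j x) (T j y)) / ((Fbox d n).card : ℝ)) Filter.atTop

/-- The pseudometric `ρ_f(x,y) = inf {ε > 0 : D̄({i : |f(T^i x) − f(T^i y)| > ε}) < ε}`. -/
def rhoF {d : ℕ} (T : (Fin d → ℤ) → X → X) (f : X → ℂ) (x y : X) : ℝ :=
  sInf {ε : ℝ | 0 < ε ∧ upperDensity d {i | ε < ‖f (T i x) - f (T i y)‖} < ε}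

/-- `g ∈ L²(X,μ)` is an eigenfunction of the action: `g ≠ 0` and there is `w ∈ ℝ^d` with
`g ∘ T^j = e^{2πi⟨w,j⟩} g` a.e. for all `j`. -/
def IsEigenfunction {d : ℕ} [MeasurableSpace X] (μ : Measure X)
    (T : (Fin d → ℤ) → X → X) (g : Lp ℂ 2 μ) : Prop :=
  g ≠ 0 ∧ ∃ w : Fin d → ℝ, ∀ j : Fin d → ℤ,
    (g : X → ℂ) ∘ T j =ᵐ[μ]
      fun x => Complex.exp (2 * Real.pi * Complex.I * ∑ k, (w k : ℂ) * (j k : ℂ)) * (g : X → ℂ) x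

/-- The system has discrete spectrum: there is an orthonormal (Hilbert) basis of `L²(X,μ)`
consisting of eigenfunctions. -/
def HasDiscreteSpectrum {d : ℕ} [MeasurableSpace X] (μ : Measure X)
    (T : (Fin d → ℤ) → X → X) : Prop :=
  ∃ (ι : Type) (b : HilbertBasis ι ℂ (Lp ℂ 2 μ)), ∀ i : ι, IsEigenfunction μ T (b i)

/-- `(X,T)` is `μ`-mean equicontinuous. -/
def MuMeanEquicont {d : ℕ} [MetricSpace X] [MeasurableSpace X] (μ : Measure X)
    (T : (Fin d → ℤ) → X → X) : Prop :=
  ∀ τ : ℝ, 0 < τ → ∃ M : Set X, IsCompact M ∧ 1 - ENNReal.ofReal τ ≤ μ M ∧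
    ∀ ε : ℝ, 0 < ε → ∃ δ : ℝ, 0 < δ ∧
      ∀ x ∈ M, ∀ y ∈ M, dist x y ≤ δ → dB T x y ≤ ε

/-- `(X,T)` is `μ-f`-mean equicontinuous. -/
def MuFMeanEquicont {d : ℕ} [MetricSpace X] [MeasurableSpace X] (μ : Measure X)
    (T : (Fin d → ℤ) → X → X) (f : X → ℂ) : Prop :=
  ∀ τ : ℝ, 0 < τ → ∃ M : Set X, IsCompact M ∧ 1 - ENNReal.ofReal τ ≤ μ M ∧
    ∀ ε : ℝ, 0 < ε → ∃ δ : ℝ, 0 < δ ∧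
      ∀ x ∈ M, ∀ y ∈ M, dist x y ≤ δ → rhoF T f x y ≤ ε

section CommonEigenvector

theorem exists_common_eigenvector {ι K V : Type*} [Field K] [IsAlgClosed K] [AddCommGroup V]
    [Module K V] (f : ι → Module.End K V) (hf : ∀ i j, Commute (f i) (f j)) (W : Submodule K V)
    [FiniteDimensional K W] (hW : W ≠ ⊥) (hfW : ∀ i, ∀ v ∈ W, f i v ∈ W) :
    ∃ v ∈ W, v ≠ 0 ∧ ∀ i, ∃ c : K, f i v = c • v := by
  induction hn : Module.finrank K W using Nat.strong_induction_on generalizing W with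
  | _ n ih =>
    by_cases hscalar : ∀ i, ∃ c : K, ∀ v ∈ W, f i v = c • v
    · obtain ⟨v, hv, hv0⟩ := W.exists_mem_ne_zero_of_ne_bot hW
      exact ⟨v, hv, hv0, fun i => (hscalar i).imp fun c hc => hc v hv⟩
    push Not at hscalar
    obtain ⟨i, hi⟩ := hscalar
    have : Nontrivial W := W.nontrivial_iff_ne_bot.2 hW
    obtain ⟨c, hc⟩ := Module.End.exists_eigenvalue ((f i).restrict (hfW i))
    obtain ⟨u, hu⟩ := hc.exists_hasEigenvector
    have hmem (v : V) : v ∈ W ⊓ (f i).eigenspace c ↔ v ∈ W ∧ f i v = c • v := by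
      rw [Submodule.mem_inf, Module.End.mem_eigenspace_iff]
    have hlt : W ⊓ (f i).eigenspace c < W := by
      obtain ⟨v, hvW, hv⟩ := hi c
      exact inf_le_left.lt_of_ne fun h => hv ((hmem v).1 (h.symm ▸ hvW)).2
    have hne : W ⊓ (f i).eigenspace c ≠ ⊥ := by
      have hu_mem : (u : V) ∈ W ⊓ (f i).eigenspace c :=
        (hmem u).2 ⟨u.2, congrArg Subtype.val hu.apply_eq_smul⟩
      exact (Submodule.ne_bot_iff _).2 ⟨u, hu_mem, fun h => hu.2 (Subtype.ext h)⟩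
    have hinv : ∀ j, ∀ v ∈ W ⊓ (f i).eigenspace c, f j v ∈ W ⊓ (f i).eigenspace c := by
      intro j v hv
      obtain ⟨hvW, hvc⟩ := (hmem v).1 hv
      refine (hmem _).2 ⟨hfW j v hvW, ?_⟩
      have hij : f i (f j v) = f j (f i v) := DFunLike.congr_fun (hf i j) v
      rw [hij, hvc, map_smul]
    have : FiniteDimensional K ↥(W ⊓ (f i).eigenspace c) :=
      Submodule.finiteDimensional_of_le inf_le_left
    obtain ⟨v, hv, hv0, hvf⟩ :=
      ih _ (hn ▸ Submodule.finrank_lt_finrank_of_lt hlt) _ hne hinv rfl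
    exact ⟨v, ((hmem v).1 hv).1, hv0, hvf⟩

end CommonEigenvector

section MarkovKakutani

variable {ι E : Type*} [NormedAddCommGroup E] [NormedSpace ℝ E] {C : Set E}

theorem exists_isFixedPt_of_isCompact_of_convex (S : E →L[ℝ] E) (hC : IsCompact C)
    (hconv : Convex ℝ C) (hne : C.Nonempty) (hS : Set.MapsTo S C C) :
    ∃ x ∈ C, S x = x := by
  obtain ⟨y, hy⟩ := hne
  have horbit (k : ℕ) : S^[k] y ∈ C := hS.iterate k hy
  have hmem (n : ℕ) : birkhoffAverage ℝ S id (n + 1) y ∈ C := by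
    rw [birkhoffAverage, birkhoffSum, Finset.smul_sum]
    refine hconv.sum_mem (fun _ _ => by positivity) ?_ fun k _ => horbit k
    rw [Finset.sum_const, Finset.card_range, nsmul_eq_mul, mul_inv_cancel₀ (by positivity)]
  obtain ⟨x, hx, φ, hφ, hlim⟩ := hC.tendsto_subseq hmem
  refine ⟨x, hx, ?_⟩
  have hbdd : Bornology.IsBounded (Set.range fun k => id (S^[k] y)) :=
    hC.isBounded.subset (Set.range_subset_iff.2 horbit)
  have hdiff : Tendsto (fun n => S (birkhoffAverage ℝ S id (φ n + 1) y) -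
      birkhoffAverage ℝ S id (φ n + 1) y) atTop (nhds 0) := by
    refine ((tendsto_birkhoffAverage_apply_sub_birkhoffAverage ℝ hbdd).comp
      ((tendsto_add_atTop_nat 1).comp hφ.tendsto_atTop)).congr fun n => ?_
    simp only [Function.comp_apply, birkhoffAverage, birkhoffSum, map_smul, map_sum,
      ← Function.iterate_succ_apply, Function.iterate_succ_apply', id_eq]
  exact sub_eq_zero.1 (tendsto_nhds_unique
    (((S.continuous.tendsto x).comp hlim).sub hlim) hdiff)

theorem exists_common_isFixedPt_of_isCompact_of_convex (S : ι → E →L[ℝ] E)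
    (hcomm : ∀ i j, Commute (S i) (S j)) (hC : IsCompact C) (hconv : Convex ℝ C)
    (hne : C.Nonempty) (hS : ∀ i, Set.MapsTo (S i) C C) :
    ∃ x ∈ C, ∀ i, S i x = x := by
  have hclosed (i : ι) : IsClosed {x | S i x = x} :=
    isClosed_eq (S i).continuous continuous_id
  have hfin (s : Finset ι) : (C ∩ ⋂ i ∈ s, {x | S i x = x}).Nonempty := by
    induction s using Finset.induction_on with
    | empty => simpa using hne
    | insert i s _ ih =>
      have hconv' : Convex ℝ (⋂ j ∈ s, {x | S j x = x}) :=
        convex_iInter₂ fun j _ => (LinearMap.eqLocus (S j : E →ₗ[ℝ] E) LinearMap.id).convex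
      have hmaps : Set.MapsTo (S i) (C ∩ ⋂ j ∈ s, {x | S j x = x})
          (C ∩ ⋂ j ∈ s, {x | S j x = x}) := by
        rintro x ⟨hxC, hx⟩
        refine ⟨hS i hxC, Set.mem_iInter₂.2 fun j hj => ?_⟩
        have hxj : S j x = x := Set.mem_iInter₂.1 hx j hj
        have hji : S j (S i x) = S i (S j x) := DFunLike.congr_fun (hcomm j i) x
        rw [Set.mem_ofPred_eq, hji, hxj]
      obtain ⟨x, ⟨hxC, hx⟩, hxi⟩ := exists_isFixedPt_of_isCompact_of_convex (S i)
        (hC.inter_right (isClosed_biInter fun j _ => hclosed j)) (hconv.inter hconv') ih hmaps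
      refine ⟨x, hxC, ?_⟩
      rw [Finset.set_biInter_insert]
      exact ⟨hxi, hx⟩
  obtain ⟨x, hxC, hx⟩ := hC.inter_iInter_nonempty _ hclosed hfin
  exact ⟨x, hxC, fun i => Set.mem_iInter.1 hx i⟩

end MarkovKakutani

section RankOneHull

open InnerProductSpace ContinuousLinearMap

variable {H : Type*} [NormedAddCommGroup H] [InnerProductSpace ℂ H] {s : Set H}

/-- The closed convex hull of the positive rank one operators `z ↦ ⟪x, z⟫ x` with `x ∈ s`. When
`s` is an orbit of isometries, this is where an operator commuting with them is found. -/
def rankOneHull (s : Set H) : Set (H →L[ℂ] H) :=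
  closedConvexHull ℝ ((fun x => rankOne ℂ x x) '' s)

theorem rankOneHull_subset {t : Set (H →L[ℂ] H)} (hst : ∀ x ∈ s, rankOne ℂ x x ∈ t)
    (hconv : Convex ℝ t) (hclosed : IsClosed t) : rankOneHull s ⊆ t :=
  closedConvexHull_min (Set.image_subset_iff.2 hst) hconv hclosed

theorem rankOne_mem_rankOneHull {x : H} (hx : x ∈ s) : rankOne ℂ x x ∈ rankOneHull s :=
  subset_closedConvexHull (Set.mem_image_of_mem _ hx)

theorem isCompact_rankOneHull [CompleteSpace H] (hs : TotallyBounded s) :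
    IsCompact (rankOneHull s) := by
  have hcont : Continuous fun x : H => rankOne ℂ x x :=
    ((smulRightL ℂ H H).continuous₂).comp ((innerSL ℂ (E := H)).continuous.prodMk continuous_id)
  have himage : TotallyBounded ((fun x : H => rankOne ℂ x x) '' s) :=
    ((hs.closure.isCompact_of_isClosed isClosed_closure).image hcont).totallyBounded.subset
      (Set.image_mono subset_closure)
  rw [rankOneHull, closedConvexHull_eq_closure_convexHull]
  exact himage.convexHull.closure.isCompact_of_isClosed isClosed_closure

variable {K : H →L[ℂ] H}

theorem isCompactOperator_of_mem_rankOneHull [CompleteSpace H] (hK : K ∈ rankOneHull s) :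
    IsCompactOperator K := by
  refine rankOneHull_subset (t := {A : H →L[ℂ] H | IsCompactOperator A}) (fun x _ => ?_)
    ((compactOperator (RingHom.id ℂ) H H).restrictScalars ℝ).convex
    isClosed_setOfPred_isCompactOperator hK
  have h : IsCompactOperator (innerSL ℂ x) := isCompactOperator_of_locallyCompactSpace_dom _
  exact h.clm_comp (toSpanSingleton ℂ x)

theorem isSelfAdjoint_of_mem_rankOneHull [CompleteSpace H] (hK : K ∈ rankOneHull s) :
    IsSelfAdjoint K :=
  rankOneHull_subset (t := {A : H →L[ℂ] H | IsSelfAdjoint A}) (fun x _ => adjoint_rankOne x x)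
    (selfAdjoint.submodule ℝ (H →L[ℂ] H)).convex (isClosed_eq continuous_star continuous_id) hK

theorem apply_mem_of_mem_rankOneHull {W : Submodule ℂ H} (hW : IsClosed (W : Set H))
    (hsW : s ⊆ W) (hK : K ∈ rankOneHull s) (z : H) : K z ∈ W :=
  rankOneHull_subset (t := (fun A : H →L[ℂ] H => A z) ⁻¹' W)
    (fun _ hx => W.smul_mem _ (hsW hx))
    ((W.restrictScalars ℝ).convex.is_linear_preimage ⟨fun _ _ => rfl, fun _ _ => rfl⟩)
    (hW.preimage (apply ℂ H z).continuous) hK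

/-- The functional `A ↦ ∑ y ∈ t, re ⟪y, A y⟫`, for a finite net `t` of `s`, separates the hull
from `0`. -/
theorem zero_notMem_rankOneHull (hs : TotallyBounded s) {r : ℝ} (hr : 0 < r)
    (hsr : ∀ x ∈ s, r ≤ ‖x‖) : (0 : H →L[ℂ] H) ∉ rankOneHull s := by
  obtain ⟨t, ht, hst⟩ := Metric.totallyBounded_iff.1 hs (r / 2) (half_pos hr)
  let φ : (H →L[ℂ] H) →L[ℝ] ℝ := ∑ y ∈ ht.toFinset, Complex.reCLM ∘L
    (innerSL ℂ y ∘L apply ℂ H y).restrictScalars ℝ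
  have hφ (x : H) : φ (rankOne ℂ x x) = ∑ y ∈ ht.toFinset, ‖inner ℂ x y‖ ^ 2 := by
    simp only [φ, _root_.sum_apply]
    refine Finset.sum_congr rfl fun y _ => ?_
    change (inner ℂ y (rankOne ℂ x x y)).re = _
    rw [rankOne_apply, inner_smul_right, mul_comm, ← inner_conj_symm, RCLike.conj_mul]
    norm_cast
  have hinner {x y : H} (hx : r ≤ ‖x‖) (hxy : ‖x - y‖ < r / 2) : r ^ 2 / 2 ≤ ‖inner ℂ x y‖ := by
    have hsplit : ‖x‖ ^ 2 ≤ ‖inner ℂ x y‖ + ‖x‖ * (r / 2) := calc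
      ‖x‖ ^ 2 = ‖inner ℂ x y + inner ℂ x (x - y)‖ := by
        rw [← inner_add_right, add_sub_cancel, inner_self_eq_norm_sq_to_K]
        norm_num
      _ ≤ ‖inner ℂ x y‖ + ‖x‖ * (r / 2) := (norm_add_le _ _).trans
        (by gcongr; exact (norm_inner_le_norm _ _).trans (by gcongr))
    nlinarith
  have hlower : rankOneHull s ⊆ {A | (r ^ 2 / 2) ^ 2 ≤ φ A} := by
    refine rankOneHull_subset (fun x hx => ?_)
      (convex_halfSpace_ge (φ : (H →L[ℂ] H) →ₗ[ℝ] ℝ).isLinear _)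
      (isClosed_le continuous_const φ.continuous)
    obtain ⟨y, hyt, hxy⟩ := Set.mem_iUnion₂.1 (hst hx)
    rw [Set.mem_ofPred_eq, hφ]
    calc (r ^ 2 / 2) ^ 2 ≤ ‖inner ℂ x y‖ ^ 2 := by
          gcongr
          exact hinner (hsr x hx) (by rwa [← dist_eq_norm])
      _ ≤ _ := Finset.single_le_sum (f := fun y => ‖inner ℂ x y‖ ^ 2)
        (fun _ _ => by positivity) (ht.mem_toFinset.2 hyt)
  intro h0
  have hle : (r ^ 2 / 2) ^ 2 ≤ φ 0 := hlower h0
  rw [map_zero] at hle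
  exact hle.not_gt (by positivity)

theorem mapsTo_conj_rankOneHull [CompleteSpace H] {V : H →L[ℂ] H} (hV : Set.MapsTo V s s) :
    Set.MapsTo (mulLeftRight ℝ (H →L[ℂ] H) V (star V)) (rankOneHull s) (rankOneHull s) := by
  refine rankOneHull_subset (fun x hx => ?_)
    (convex_closedConvexHull.linear_preimage
      (mulLeftRight ℝ (H →L[ℂ] H) V (star V) : (H →L[ℂ] H) →ₗ[ℝ] (H →L[ℂ] H)))
    (isClosed_closedConvexHull.preimage (mulLeftRight ℝ (H →L[ℂ] H) V (star V)).continuous)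
  have hconj : V * rankOne ℂ x x * star V = rankOne ℂ (V x) (V x) := by
    rw [ContinuousLinearMap.mul_def, ContinuousLinearMap.mul_def, comp_rankOne, rankOne_comp,
      star_eq_adjoint, adjoint_adjoint]
  change V * rankOne ℂ x x * star V ∈ rankOneHull s
  exact hconj ▸ rankOne_mem_rankOneHull (hV hx)

end RankOneHull

section OrthonormalSets

variable {𝕜 H : Type*} [RCLike 𝕜] [NormedAddCommGroup H] [InnerProductSpace 𝕜 H] {s : Set H}

theorem orthonormal_insert (hs : Orthonormal 𝕜 ((↑) : s → H)) {e : H} (he : ‖e‖ = 1)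
    (hes : e ∈ (Submodule.span 𝕜 s)ᗮ) : Orthonormal 𝕜 ((↑) : ↥(insert e s) → H) := by
  have hse (v : H) (hv : v ∈ s) : inner 𝕜 v e = 0 := hes v (Submodule.subset_span hv)
  refine ⟨fun ⟨v, hv⟩ => hv.elim (fun h => h ▸ he) fun h => hs.1 ⟨v, h⟩, ?_⟩
  rintro ⟨v, rfl | hv⟩ ⟨w, rfl | hw⟩ hvw
  · exact absurd rfl hvw
  · exact inner_eq_zero_symm.1 (hse w hw)
  · exact hse v hv
  · exact hs.2 (i := ⟨v, hv⟩) (j := ⟨w, hw⟩) (by simpa [Subtype.ext_iff] using hvw)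

theorem countable_of_orthonormal [TopologicalSpace.SeparableSpace H]
    (hs : Orthonormal 𝕜 ((↑) : s → H)) : s.Countable := by
  refine Set.PairwiseDisjoint.countable_of_isOpen (s := fun v => ball v (1 / 2))
    (fun v hv w hw hvw => ball_disjoint_ball ?_) (fun _ _ => isOpen_ball)
    fun v _ => ⟨v, mem_ball_self (by norm_num)⟩
  have horth : inner 𝕜 v w = 0 :=
    hs.2 (i := ⟨v, hv⟩) (j := ⟨w, hw⟩) fun h => hvw (congrArg Subtype.val h)
  have hsq : ‖v - w‖ ^ 2 = 2 := by
    rw [@norm_sub_sq 𝕜, horth, hs.1 ⟨v, hv⟩, hs.1 ⟨w, hw⟩, map_zero]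
    norm_num
  rw [dist_eq_norm]
  nlinarith [norm_nonneg (v - w)]

theorem exists_hilbertBasis_of_exists_mem_orthogonal [CompleteSpace H]
    [TopologicalSpace.SeparableSpace H] {P : Set H} (hsmul : ∀ v ∈ P, ∀ c : 𝕜, c • v ∈ P)
    (hP : ∀ s ⊆ P, (Submodule.span 𝕜 s)ᗮ ≠ ⊥ → ∃ v ∈ P, v ∈ (Submodule.span 𝕜 s)ᗮ ∧ v ≠ 0) :
    ∃ (ι : Type) (b : HilbertBasis ι 𝕜 H), ∀ i, b i ∈ P := by
  obtain ⟨s, hmax⟩ : ∃ s, Maximal (· ∈ {t : Set H | Orthonormal 𝕜 ((↑) : t → H) ∧ t ⊆ P}) s := by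
    refine zorn_subset _ fun c hc hchain => ⟨⋃₀ c, ⟨?_, ?_⟩, fun t => Set.subset_sUnion_of_mem⟩
    · exact orthonormal_sUnion_of_directed hchain.directedOn fun t ht => (hc ht).1
    · exact Set.sUnion_subset fun t ht => (hc ht).2
  obtain ⟨hs, hsP⟩ := hmax.prop
  have hbot : (Submodule.span 𝕜 s)ᗮ = ⊥ := by
    by_contra hne
    obtain ⟨v, hvP, hv, hv0⟩ := hP s hsP hne
    have hnorm : ‖((‖v‖⁻¹ : ℝ) : 𝕜) • v‖ = 1 := by simp [norm_smul, hv0]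
    have hmem : ((‖v‖⁻¹ : ℝ) : 𝕜) • v ∈ (Submodule.span 𝕜 s)ᗮ := Submodule.smul_mem _ _ hv
    have hins := hmax.le_of_ge
      ⟨orthonormal_insert hs hnorm hmem, Set.insert_subset (hsmul v hvP _) hsP⟩
      (Set.subset_insert _ s) (Set.mem_insert _ s)
    have hzero := inner_self_eq_zero.1 (hmem _ (Submodule.subset_span hins))
    rw [hzero, norm_zero] at hnorm
    exact zero_ne_one hnorm
  have : Countable s := (countable_of_orthonormal hs).to_subtype
  have hrange : Set.range (((↑) : s → H) ∘ (equivShrink.{0} s).symm) = s := by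
    rw [(equivShrink.{0} s).symm.surjective.range_comp, Subtype.range_coe]
  refine ⟨Shrink.{0} s, HilbertBasis.mkOfOrthogonalEqBot
    (hs.comp _ (equivShrink.{0} s).symm.injective) ?_, fun i => ?_⟩
  · exact hrange.symm ▸ hbot
  · rw [HilbertBasis.coe_mkOfOrthogonalEqBot]
    exact hsP ((equivShrink.{0} s).symm i).2

end OrthonormalSets

section AlmostPeriodic

open InnerProductSpace ContinuousLinearMap

variable {G H : Type*} [CommMonoid G] [NormedAddCommGroup H] [InnerProductSpace ℂ H]
  (U : G →* (H →ₗᵢ[ℂ] H))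

/-- A vector is almost periodic for a representation by isometries if its orbit is totally
bounded. -/
def IsAlmostPeriodic (v : H) : Prop :=
  TotallyBounded (Set.range fun g => U g v)

/-- The vectors which every operator of the representation maps to a multiple of themselves; the
zero vector is included. -/
def jointEigenvectors : Set H :=
  {v | ∀ g, ∃ c : ℂ, U g v = c • v}

variable {U}

theorem map_mem_orthogonal_of_subset_jointEigenvectors {s : Set H}
    (hs : s ⊆ jointEigenvectors U) (g : G) {v : H} (hv : v ∈ (Submodule.span ℂ s)ᗮ) :
    U g v ∈ (Submodule.span ℂ s)ᗮ := by
  suffices hle : Submodule.span ℂ s ≤ (ℂ ∙ U g v)ᗮ from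
    fun u hu => Submodule.mem_orthogonal_singleton_iff_inner_left.1 (hle hu)
  refine Submodule.span_le.2 fun u hu => Submodule.mem_orthogonal_singleton_iff_inner_left.2 ?_
  obtain ⟨c, hc⟩ := hs hu g
  have hzero : (starRingEnd ℂ) c * inner ℂ u (U g v) = 0 := by
    rw [← inner_smul_left, ← hc, (U g).inner_map_map, hv u (Submodule.subset_span hu)]
  refine (mul_eq_zero.1 hzero).elim (fun hc0 => ?_) id
  have hu0 : U g u = 0 := by rw [hc, (map_eq_zero _).1 hc0, zero_smul]
  rw [(map_eq_zero_iff _ (U g).injective).1 hu0, inner_zero_left]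

theorem map_map_comm (g h : G) (v : H) : U g (U h v) = U h (U g v) :=
  DFunLike.congr_fun ((Commute.all g h).map U).eq v

theorem commute_mulLeftRight_star (𝕜 : Type*) {A : Type*} [NontriviallyNormedField 𝕜]
    [NonUnitalSeminormedRing A] [NormedSpace 𝕜 A] [IsScalarTower 𝕜 A A] [SMulCommClass 𝕜 A A]
    [StarMul A] {a b : A} (h : Commute a b) :
    Commute (mulLeftRight 𝕜 A a (star a)) (mulLeftRight 𝕜 A b (star b)) := by
  ext1 x
  calc a * (b * x * star b) * star a = a * b * x * star (a * b) := by
        rw [star_mul]; simp only [mul_assoc]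
    _ = b * (a * x * star a) * star b := by rw [h.eq, star_mul]; simp only [mul_assoc]

variable [CompleteSpace H]

theorem exists_isCompactOperator_of_isAlmostPeriodic {W : Submodule ℂ H}
    (hWclosed : IsClosed (W : Set H)) (hWU : ∀ g, ∀ v ∈ W, U g v ∈ W) {v : H} (hvW : v ∈ W)
    (hv0 : v ≠ 0) (hv : IsAlmostPeriodic U v) :
    ∃ K : H →L[ℂ] H, K ≠ 0 ∧ IsCompactOperator K ∧ IsSelfAdjoint K ∧ (∀ z, K z ∈ W) ∧
      ∀ g z, U g (K z) = K (U g z) := by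
  set s : Set H := Set.range fun g => U g v
  let V (g : G) : H →L[ℂ] H := (U g).toContinuousLinearMap
  have hVs (g : G) : Set.MapsTo (V g) s s := by
    rintro _ ⟨h, rfl⟩
    exact ⟨g * h, by simp only [map_mul]; rfl⟩
  have hVV (g h : G) : V (g * h) = V g * V h := by
    ext z
    simp only [V, map_mul]; rfl
  have hcomm (g h : G) : Commute (mulLeftRight ℝ (H →L[ℂ] H) (V g) (star (V g)))
      (mulLeftRight ℝ (H →L[ℂ] H) (V h) (star (V h))) :=
    commute_mulLeftRight_star ℝ (by rw [Commute, SemiconjBy, ← hVV, ← hVV, mul_comm])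
  have hne : (rankOneHull s).Nonempty := ⟨_, rankOne_mem_rankOneHull ⟨1, rfl⟩⟩
  obtain ⟨K, hK, hfix⟩ := exists_common_isFixedPt_of_isCompact_of_convex _ hcomm
    (isCompact_rankOneHull hv) convex_closedConvexHull hne fun g => mapsTo_conj_rankOneHull (hVs g)
  refine ⟨K, ?_, isCompactOperator_of_mem_rankOneHull hK, isSelfAdjoint_of_mem_rankOneHull hK,
    apply_mem_of_mem_rankOneHull hWclosed (Set.range_subset_iff.2 fun g => hWU g v hvW) hK, ?_⟩
  · rintro rfl
    refine zero_notMem_rankOneHull hv (norm_pos_iff.2 hv0) ?_ hK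
    rintro _ ⟨g, rfl⟩
    exact ((U g).norm_map v).ge
  · intro g z
    have hVg : star (V g) * V g = 1 :=
      (norm_map_iff_adjoint_comp_self (V g)).1 (U g).norm_map
    have hVK : V g * K = K * V g := calc
      V g * K = V g * K * star (V g) * V g := by rw [mul_assoc _ (star (V g)), hVg, mul_one]
      _ = K * V g := congrArg (· * V g) (hfix g)
    exact DFunLike.congr_fun hVK z

theorem exists_mem_jointEigenvectors_of_isAlmostPeriodic {W : Submodule ℂ H}
    (hWclosed : IsClosed (W : Set H)) (hWU : ∀ g, ∀ v ∈ W, U g v ∈ W) {v : H} (hvW : v ∈ W)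
    (hv0 : v ≠ 0) (hv : IsAlmostPeriodic U v) :
    ∃ w ∈ jointEigenvectors U, w ∈ W ∧ w ≠ 0 := by
  obtain ⟨K, hK0, hKcompact, hKself, hKW, hKU⟩ :=
    exists_isCompactOperator_of_isAlmostPeriodic hWclosed hWU hvW hv0 hv
  obtain ⟨c, hc, hc0⟩ : ∃ c, Module.End.HasEigenvalue (K : Module.End ℂ H) c ∧ c ≠ 0 := by
    by_contra! h
    exact hK0 ((eq_zero_of_forall_hasEigenvalue_eq_zero hKcompact hKself.isSymmetric).1 h)
  have : FiniteDimensional ℂ (Module.End.eigenspace (K : Module.End ℂ H) c) :=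
    finite_dimensional_eigenspace hKcompact c hc0
  have hmem {z : H} : z ∈ Module.End.eigenspace (K : Module.End ℂ H) c ↔ K z = c • z :=
    Module.End.mem_eigenspace_iff
  obtain ⟨w, hw, hw0, hwU⟩ := exists_common_eigenvector
    (fun g => ((U g).toLinearMap : Module.End ℂ H))
    (fun g h => LinearMap.ext fun z => map_map_comm g h z) _ hc
    fun g z hz => hmem.2 ((hKU g z).symm.trans (by rw [hmem.1 hz, map_smul]; rfl))
  refine ⟨w, hwU, ?_, hw0⟩
  rw [← inv_smul_smul₀ hc0 w, ← hmem.1 hw]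
  exact W.smul_mem _ (hKW w)

theorem IsAlmostPeriodic.starProjection {v : H} (hv : IsAlmostPeriodic U v) {s : Set H}
    (hs : s ⊆ jointEigenvectors U) :
    IsAlmostPeriodic U ((Submodule.span ℂ s)ᗮ.starProjection v) := by
  set W := (Submodule.span ℂ s)ᗮ
  have hWorth (g : G) {z : H} (hz : z ∈ Wᗮ) : U g z ∈ Wᗮ := by
    rw [Submodule.orthogonal_orthogonal_eq_closure] at hz ⊢
    have hspan : Submodule.span ℂ s ≤ (Submodule.span ℂ s).comap (U g).toLinearMap := by
      refine Submodule.span_le.2 fun u hu => ?_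
      obtain ⟨c, hc⟩ := hs hu g
      rw [SetLike.mem_coe, Submodule.mem_comap, LinearIsometry.coe_toLinearMap, hc]
      exact Submodule.smul_mem _ c (Submodule.subset_span hu)
    exact map_mem_closure (U g).continuous hz hspan
  have hcomm (g : G) : W.starProjection (U g v) = U g (W.starProjection v) := by
    refine Submodule.eq_starProjection_of_mem_orthogonal
      (map_mem_orthogonal_of_subset_jointEigenvectors hs g (W.starProjection_apply_mem v)) ?_
    rw [← map_sub]
    exact hWorth g (W.sub_starProjection_mem_orthogonal v)
  have himage := hv.image W.starProjection.uniformContinuous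
  rwa [← Set.range_comp, show ⇑W.starProjection ∘ (fun g => U g v) =
    fun g => U g (W.starProjection v) from funext hcomm] at himage

theorem exists_hilbertBasis_of_isAlmostPeriodic_total [TopologicalSpace.SeparableSpace H]
    (htotal : ∀ v : H, (∀ u, IsAlmostPeriodic U u → inner ℂ u v = 0) → v = 0) :
    ∃ (ι : Type) (b : HilbertBasis ι ℂ H), ∀ i, b i ∈ jointEigenvectors U := by
  refine exists_hilbertBasis_of_exists_mem_orthogonal (fun v hv c g => ?_) fun s hs hne => ?_
  · obtain ⟨a, ha⟩ := hv g
    exact ⟨a, by rw [map_smul, ha, smul_comm]⟩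
  obtain ⟨z, hz, hz0⟩ := Submodule.exists_mem_ne_zero_of_ne_bot hne
  obtain ⟨u, hu, huz⟩ : ∃ u, IsAlmostPeriodic U u ∧ inner ℂ u z ≠ 0 := by
    by_contra! h
    exact hz0 (htotal z h)
  refine exists_mem_jointEigenvectors_of_isAlmostPeriodic (Submodule.isClosed_orthogonal _)
    (fun g v hv => map_mem_orthogonal_of_subset_jointEigenvectors hs g hv)
    (Submodule.starProjection_apply_mem _ u) ?_ (hu.starProjection hs)
  contrapose! huz
  rw [← (Submodule.span ℂ s)ᗮ.starProjection_eq_self_iff.2 hz,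
    ← Submodule.inner_starProjection_left_eq_right, huz, inner_zero_left]

end AlmostPeriodic

section Characters

theorem exists_character_of_mem_jointEigenvectors {G H : Type*} [CommMonoid G]
    [NormedAddCommGroup H] [InnerProductSpace ℂ H] {U : G →* (H →ₗᵢ[ℂ] H)} {v : H}
    (hv : v ∈ jointEigenvectors U) (hv0 : v ≠ 0) :
    ∃ χ : G →* Circle, ∀ g, U g v = (χ g : ℂ) • v := by
  choose c hc using hv
  have hnorm (g : G) : c g ∈ Submonoid.unitSphere ℂ := by
    have h : ‖c g‖ * ‖v‖ = 1 * ‖v‖ := by rw [← norm_smul, ← hc, (U g).norm_map, one_mul]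
    exact mem_sphere_zero_iff_norm.2 (mul_right_cancel₀ (norm_ne_zero_iff.2 hv0) h)
  have hone : c 1 = 1 :=
    smul_left_injective ℂ hv0 (by simp only [← hc, map_one, one_smul]; rfl)
  have hmul (g h : G) : c (g * h) = c g * c h := by
    refine smul_left_injective ℂ hv0 ?_
    calc c (g * h) • v = U g (U h v) := by rw [← hc, map_mul]; rfl
      _ = (c g * c h) • v := by rw [hc h, map_smul, hc g, smul_smul, mul_comm]
  exact ⟨{ toFun := fun g => ⟨c g, hnorm g⟩
           map_one' := Subtype.ext hone
           map_mul' := fun g h => Subtype.ext (hmul g h) }, hc⟩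

theorem exists_addChar_eq_exp {d : ℕ} (χ : AddChar (Fin d → ℤ) Circle) :
    ∃ w : Fin d → ℝ, ∀ j : Fin d → ℤ,
      (χ j : ℂ) = Complex.exp (2 * Real.pi * Complex.I * ∑ k, (w k : ℂ) * (j k : ℂ)) := by
  have hprod (j : Fin d → ℤ) : χ j = ∏ k, χ (Pi.single k 1) ^ j k := by
    conv_lhs => rw [← Finset.univ_sum_single j]
    refine (map_prod χ.toMonoidHom (fun k => Multiplicative.ofAdd (Pi.single k (j k))) univ).trans
      (Finset.prod_congr rfl fun k _ => ?_)
    rw [← AddChar.map_zsmul_eq_zpow, ← Pi.single_smul, smul_eq_mul, mul_one]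
    rfl
  refine ⟨fun k => Complex.arg (χ (Pi.single k 1)) / (2 * Real.pi), fun j => ?_⟩
  have hcoe : ((χ j : Circle) : ℂ) = ∏ k, ((χ (Pi.single k 1) ^ j k : Circle) : ℂ) := by
    rw [hprod]
    exact map_prod Circle.coeHom _ _
  rw [hcoe, Finset.mul_sum, Complex.exp_sum]
  refine Finset.prod_congr rfl fun k _ => ?_
  conv_lhs => rw [← Circle.exp_arg (χ (Pi.single k 1)), Circle.coe_zpow, Circle.coe_exp,
    ← Complex.exp_int_mul]
  congr 1
  push_cast
  have hpi : (Real.pi : ℂ) ≠ 0 := Complex.ofReal_ne_zero.2 Real.pi_ne_zero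
  field_simp

end Characters

section BoxMeans

open scoped ENNReal NNReal Topology

variable {d : ℕ}

/-- The mean of a family of extended nonnegative numbers over the box `Fbox d n`. -/
def boxMean (u : (Fin d → ℤ) → ℝ≥0∞) (n : ℕ) : ℝ≥0∞ :=
  (∑ j ∈ Fbox d n, u j) / (Fbox d n).card

/-- The upper mean of a family along the boxes `Fbox d n`. -/
def upperMean (u : (Fin d → ℤ) → ℝ≥0∞) : ℝ≥0∞ :=
  limsup (boxMean u) atTop

theorem card_Fbox (d n : ℕ) : (Fbox d n).card = n ^ d := by
  simp [Fbox, Fintype.card_piFinset]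

theorem mem_Fbox {n : ℕ} {j : Fin d → ℤ} : j ∈ Fbox d n ↔ ∀ k, 0 ≤ j k ∧ j k < n := by
  simp only [Fbox, Fintype.mem_piFinset, Finset.mem_Icc, Int.le_sub_one_iff]

theorem card_Fbox_pos {n : ℕ} (hn : 0 < n) : 0 < (Fbox d n).card := by
  rw [card_Fbox]
  exact pow_pos hn d

theorem boxMean_mono {u v : (Fin d → ℤ) → ℝ≥0∞} (h : u ≤ v) : boxMean u ≤ boxMean v :=
  fun _ => ENNReal.div_le_div_right (Finset.sum_le_sum fun j _ => h j) _

theorem boxMean_add (u v : (Fin d → ℤ) → ℝ≥0∞) : boxMean (u + v) = boxMean u + boxMean v := by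
  funext n
  simp only [boxMean, Pi.add_apply, Finset.sum_add_distrib, ENNReal.add_div]

theorem boxMean_const_mul (c : ℝ≥0∞) (u : (Fin d → ℤ) → ℝ≥0∞) (n : ℕ) :
    boxMean (fun j => c * u j) n = c * boxMean u n := by
  rw [boxMean, ← Finset.mul_sum, mul_div_assoc, boxMean]

theorem boxMean_const {n : ℕ} (hn : 0 < n) (c : ℝ≥0∞) :
    boxMean (fun _ : Fin d → ℤ => c) n = c := by
  rw [boxMean, Finset.sum_const, nsmul_eq_mul, mul_comm]
  exact ENNReal.mul_div_cancel_right (Nat.cast_ne_zero.2 (card_Fbox_pos hn).ne')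
    (ENNReal.natCast_ne_top _)

theorem boxMean_le {u : (Fin d → ℤ) → ℝ≥0∞} {c : ℝ≥0∞} (hu : ∀ j, u j ≤ c) (n : ℕ) :
    boxMean u n ≤ c := by
  refine ENNReal.div_le_of_le_mul ?_
  rw [mul_comm, ← nsmul_eq_mul]
  exact Finset.sum_le_card_nsmul _ _ _ fun j _ => hu j

theorem upperMean_mono {u v : (Fin d → ℤ) → ℝ≥0∞} (h : u ≤ v) : upperMean u ≤ upperMean v :=
  limsup_le_limsup (.of_forall (boxMean_mono h))

theorem upperMean_const (c : ℝ≥0∞) : upperMean (fun _ : Fin d → ℤ => c) = c := by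
  refine (limsup_congr ?_).trans (limsup_const (f := atTop (α := ℕ)) c)
  filter_upwards [eventually_gt_atTop 0] with n hn using boxMean_const hn c

theorem upperMean_const_mul {c : ℝ≥0∞} (hc : c ≠ ∞) (u : (Fin d → ℤ) → ℝ≥0∞) :
    upperMean (fun j => c * u j) = c * upperMean u := by
  rw [upperMean, funext (boxMean_const_mul c u), ENNReal.limsup_const_mul_of_ne_top hc, upperMean]

theorem limsup_add_le_limsup_add_limsup (u v : ℕ → ℝ≥0∞) :
    limsup (u + v) atTop ≤ limsup u atTop + limsup v atTop := by
  simp only [limsup_eq_iInf_iSup_of_nat (u := u), limsup_eq_iInf_iSup_of_nat (u := v)]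
  refine ENNReal.le_iInf_add_iInf fun m n => limsup_le_of_le (by isBoundedDefault) ?_
  filter_upwards [eventually_ge_atTop m, eventually_ge_atTop n] with i hm hn
  exact add_le_add (le_iSup₂ (f := fun i _ => u i) i hm) (le_iSup₂ (f := fun i _ => v i) i hn)

theorem upperMean_add_le (u v : (Fin d → ℤ) → ℝ≥0∞) :
    upperMean (u + v) ≤ upperMean u + upperMean v := by
  rw [upperMean, boxMean_add]
  exact limsup_add_le_limsup_add_limsup _ _

theorem upperMean_sum_le {ι : Type*} (s : Finset ι) (u : ι → (Fin d → ℤ) → ℝ≥0∞) :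
    upperMean (∑ k ∈ s, u k) ≤ ∑ k ∈ s, upperMean (u k) :=
  Finset.le_sum_of_subadditive upperMean (upperMean_const 0).le upperMean_add_le s u

theorem pow_sub_le_card_filter_add_mem_Fbox {n m : ℕ} {i : Fin d → ℤ} (hi : ∀ k, |i k| ≤ m) :
    (n - 2 * m) ^ d ≤ ((Fbox d n).filter (fun j => j + i ∈ Fbox d n)).card := by
  rw [← card_Fbox, ← Finset.card_map (addRightEmbedding fun _ : Fin d => (m : ℤ))]
  refine Finset.card_le_card fun j hj => ?_
  obtain ⟨l, hl, rfl⟩ := Finset.mem_map.1 hj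
  rw [mem_Fbox] at hl
  refine Finset.mem_filter.2 ⟨mem_Fbox.2 fun k => ?_, mem_Fbox.2 fun k => ?_⟩ <;>
  · have hk := hl k
    have hik := abs_le.1 (hi k)
    simp only [addRightEmbedding_apply, Pi.add_apply]
    omega

theorem tendsto_card_sdiff_filter_add_mem_Fbox_div (i : Fin d → ℤ) :
    Tendsto (fun n => ((Fbox d n \ (Fbox d n).filter (fun j => j + i ∈ Fbox d n)).card : ℝ) /
      (Fbox d n).card) atTop (𝓝 0) := by
  set m : ℕ := ∑ k, (i k).natAbs
  have hi (k : Fin d) : |i k| ≤ m := by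
    rw [Int.abs_eq_natAbs]
    exact_mod_cast Finset.single_le_sum (f := fun k => (i k).natAbs) (fun _ _ => Nat.zero_le _)
      (Finset.mem_univ k)
  have hlim : Tendsto (fun n : ℕ => 1 - (1 - (2 * m : ℝ) / n) ^ d) atTop (𝓝 0) := by
    have h := ((tendsto_const_div_atTop_nhds_zero_nat (2 * m : ℝ)).const_sub 1).pow d
    simpa using h.const_sub 1
  refine squeeze_zero' (.of_forall fun n => by positivity) ?_ hlim
  filter_upwards [eventually_ge_atTop (2 * m), eventually_gt_atTop 0] with n hn hn0
  have hcard := Finset.card_sdiff_add_card_eq_card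
    (Finset.filter_subset (fun j => j + i ∈ Fbox d n) (Fbox d n))
  have hgood : ((n : ℝ) - 2 * m) ^ d ≤
      ((Fbox d n).filter (fun j => j + i ∈ Fbox d n)).card := by
    exact_mod_cast (Nat.cast_le (α := ℝ)).2 (pow_sub_le_card_filter_add_mem_Fbox (n := n) hi)
  rw [card_Fbox] at hcard ⊢
  have hcardR := congrArg (Nat.cast (R := ℝ)) hcard
  have hnR : (0 : ℝ) < n := Nat.cast_pos.2 hn0
  push_cast at hcardR ⊢
  rw [div_le_iff₀ (by positivity), sub_mul, ← mul_pow, sub_mul, div_mul_cancel₀ _ hnR.ne', one_mul,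
    one_mul]
  linarith

theorem upperMean_comp_add_le {u : (Fin d → ℤ) → ℝ≥0∞} {C : ℝ≥0} (hu : ∀ j, u j ≤ C)
    (i : Fin d → ℤ) : upperMean (fun j => u (j + i)) ≤ upperMean u := by
  set good : ℕ → Finset (Fin d → ℤ) := fun n => (Fbox d n).filter (fun j => j + i ∈ Fbox d n)
  have hbad : Tendsto (fun n => (C : ℝ≥0∞) * (((Fbox d n \ good n).card : ℝ≥0∞) /
      (Fbox d n).card)) atTop (𝓝 0) := by
    have h := ENNReal.tendsto_ofReal (tendsto_card_sdiff_filter_add_mem_Fbox_div i)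
    rw [ENNReal.ofReal_zero] at h
    have hC := ENNReal.Tendsto.const_mul h (.inr (ENNReal.coe_ne_top (r := C)))
    rw [mul_zero] at hC
    refine hC.congr' ?_
    filter_upwards [eventually_gt_atTop 0] with n hn
    rw [ENNReal.ofReal_div_of_pos (Nat.cast_pos.2 (card_Fbox_pos hn)), ENNReal.ofReal_natCast,
      ENNReal.ofReal_natCast]
  rw [upperMean, upperMean, ← ENNReal.limsup_add_of_right_tendsto_zero hbad (boxMean u)]
  refine limsup_le_limsup (.of_forall fun n => ?_)
  rw [Pi.add_apply, boxMean, boxMean, ← mul_div_assoc, ← ENNReal.add_div]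
  refine ENNReal.div_le_div_right ?_ _
  rw [← Finset.sum_sdiff (Finset.filter_subset (fun j => j + i ∈ Fbox d n) (Fbox d n)), add_comm]
  refine add_le_add ?_ ?_
  · refine (Finset.sum_map (good n) (addRightEmbedding i) u).ge.trans
      (Finset.sum_le_sum_of_subset fun l hl => ?_)
    obtain ⟨j, hj, rfl⟩ := Finset.mem_map.1 hl
    exact (Finset.mem_filter.1 hj).2
  · rw [mul_comm, ← nsmul_eq_mul]
    exact Finset.sum_le_card_nsmul _ _ _ fun j _ => hu _

theorem upperMean_comp_add {u : (Fin d → ℤ) → ℝ≥0∞} {C : ℝ≥0} (hu : ∀ j, u j ≤ C)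
    (i : Fin d → ℤ) : upperMean (fun j => u (j + i)) = upperMean u := by
  refine (upperMean_comp_add_le hu i).antisymm ?_
  simpa only [neg_add_cancel_right] using upperMean_comp_add_le (fun j => hu (j + i)) (-i)

theorem ofReal_limsup_sum_div_card {u : (Fin d → ℤ) → ℝ} (hu0 : ∀ j, 0 ≤ u j) {C : ℝ}
    (huC : ∀ j, u j ≤ C) :
    ENNReal.ofReal (limsup (fun n => (∑ j ∈ Fbox d n, u j) / ((Fbox d n).card : ℝ)) atTop) =
      upperMean fun j => ENNReal.ofReal (u j) := by
  have hmean0 (n : ℕ) : 0 ≤ (∑ j ∈ Fbox d n, u j) / ((Fbox d n).card : ℝ) :=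
    div_nonneg (Finset.sum_nonneg fun j _ => hu0 j) (Nat.cast_nonneg _)
  have hmeanC : ∀ᶠ n in atTop, (∑ j ∈ Fbox d n, u j) / ((Fbox d n).card : ℝ) ≤ C := by
    filter_upwards [eventually_gt_atTop 0] with n hn
    rw [div_le_iff₀ (Nat.cast_pos.2 (card_Fbox_pos hn)), mul_comm, ← nsmul_eq_mul]
    exact Finset.sum_le_card_nsmul _ _ _ fun j _ => huC j
  rw [ENNReal.ofReal_limsup (isBoundedUnder_of ⟨0, hmean0⟩).isCoboundedUnder_le ⟨C, hmeanC⟩]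
  refine limsup_congr ?_
  filter_upwards [eventually_gt_atTop 0] with n hn
  rw [ENNReal.ofReal_div_of_pos (Nat.cast_pos.2 (card_Fbox_pos hn)), ENNReal.ofReal_natCast,
    ENNReal.ofReal_sum_of_nonneg fun j _ => hu0 j, boxMean]

theorem ofReal_upperDensity (S : Set (Fin d → ℤ)) :
    ENNReal.ofReal (upperDensity d S) = upperMean (S.indicator 1) := by
  have hcard (n : ℕ) : (((Fbox d n).filter (fun j => j ∈ S)).card : ℝ) =
      ∑ j ∈ Fbox d n, S.indicator 1 j := by
    rw [Finset.sum_indicator_eq_sum_filter, Finset.card_eq_sum_ones, Nat.cast_sum]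
    simp only [Nat.cast_one, Pi.one_apply]
  simp only [upperDensity, hcard]
  rw [ofReal_limsup_sum_div_card (u := S.indicator 1) (C := 1)
    (Set.indicator_nonneg fun _ _ => zero_le_one) (Set.indicator_le_self' fun _ _ => zero_le_one)]
  congr 1
  funext j
  by_cases hj : j ∈ S
  · simp only [Set.indicator_of_mem hj, Pi.one_apply, ENNReal.ofReal_one]
  · simp only [Set.indicator_of_notMem hj, ENNReal.ofReal_zero]

theorem upperDensity_le_one (S : Set (Fin d → ℤ)) : upperDensity d S ≤ 1 := by
  rw [← ENNReal.ofReal_le_one, ofReal_upperDensity, ← upperMean_const (d := d) 1]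
  exact upperMean_mono (Set.indicator_le_self' fun _ _ => zero_le)

end BoxMeans

section Ergodic

open scoped ENNReal NNReal Topology

section Covering

variable {d : ℕ}

/-- The box of side `n` in `ℤ^d` with lowest corner `i`. -/
def boxAt (i : Fin d → ℤ) (n : ℕ) : Finset (Fin d → ℤ) :=
  (Fbox d n).map (addRightEmbedding i)

theorem mem_boxAt {i j : Fin d → ℤ} {n : ℕ} : j ∈ boxAt i n ↔ ∀ k, i k ≤ j k ∧ j k < i k + n := by
  rw [boxAt, Finset.mem_map]
  refine ⟨?_, fun h => ⟨j - i, mem_Fbox.2 fun k => ?_, sub_add_cancel j i⟩⟩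
  · rintro ⟨l, hl, rfl⟩ k
    have hk := mem_Fbox.1 hl k
    simp only [addRightEmbedding_apply, Pi.add_apply]
    omega
  · have hk := h k
    simp only [Pi.sub_apply]
    omega

theorem card_boxAt (i : Fin d → ℤ) (n : ℕ) : (boxAt i n).card = n ^ d := by
  rw [boxAt, Finset.card_map, card_Fbox]

theorem sum_boxAt {M : Type*} [AddCommMonoid M] (u : (Fin d → ℤ) → M) (i : Fin d → ℤ) (n : ℕ) :
    ∑ j ∈ boxAt i n, u j = ∑ j ∈ Fbox d n, u (j + i) :=
  Finset.sum_map (Fbox d n) (addRightEmbedding i) u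

theorem exists_pairwiseDisjoint_boxAt (s : Finset (Fin d → ℤ)) {n : (Fin d → ℤ) → ℕ}
    (hn : ∀ i ∈ s, 0 < n i) :
    ∃ t ⊆ s, (t : Set (Fin d → ℤ)).PairwiseDisjoint (fun i => boxAt i (n i)) ∧
      s.card ≤ 3 ^ d * ∑ i ∈ t, n i ^ d := by
  obtain ⟨R, hR⟩ := (s.image n).exists_le
  obtain ⟨t, hts, hdisj, hcover⟩ := Vitali.exists_disjoint_subfamily_covering_enlargement
    (fun i => (boxAt i (n i) : Set (Fin d → ℤ))) (s : Set (Fin d → ℤ)) (fun i => (n i : ℝ)) 2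
    one_lt_two (fun _ _ => Nat.cast_nonneg _) R
    (fun i hi => Nat.cast_le.2 (hR _ (Finset.mem_image_of_mem n hi)))
    (fun i hi => ⟨i, mem_boxAt.2 fun k => ⟨le_rfl, by have := hn i hi; omega⟩⟩)
  lift t to Finset (Fin d → ℤ) using s.finite_toSet.subset hts
  refine ⟨t, mod_cast hts, fun i hi j hj hij => Finset.disjoint_coe.1 (hdisj hi hj hij), ?_⟩
  have hsub : s ⊆ t.biUnion fun j => boxAt (fun k => j k - 2 * n j) (3 * n j) := by
    intro i hi
    obtain ⟨j, hj, ⟨l, hli, hlj⟩, hij⟩ := hcover i hi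
    have hij' : n i ≤ 2 * n j := by exact_mod_cast hij
    refine Finset.mem_biUnion.2 ⟨j, hj, mem_boxAt.2 fun k => ?_⟩
    have hki := mem_boxAt.1 hli k
    have hkj := mem_boxAt.1 hlj k
    omega
  calc s.card ≤ ∑ j ∈ t, (boxAt (fun k => j k - 2 * n j) (3 * n j)).card :=
        (Finset.card_le_card hsub).trans Finset.card_biUnion_le
    _ = 3 ^ d * ∑ j ∈ t, n j ^ d := by simp only [card_boxAt, mul_pow, Finset.mul_sum]

theorem mul_card_le_of_forall_le_sum_boxAt {u : (Fin d → ℤ) → ℝ≥0∞} {c : ℝ≥0∞}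
    {s t : Finset (Fin d → ℤ)}
    (hs : ∀ i ∈ s, ∃ n, 0 < n ∧ boxAt i n ⊆ t ∧ c * n ^ d ≤ ∑ j ∈ boxAt i n, u j) :
    c * s.card ≤ 3 ^ d * ∑ j ∈ t, u j := by
  choose! n hn hnt hsum using hs
  obtain ⟨r, hrs, hdisj, hcard⟩ := exists_pairwiseDisjoint_boxAt s hn
  calc c * s.card ≤ c * (3 ^ d * ∑ i ∈ r, (n i : ℝ≥0∞) ^ d) := by
        gcongr
        exact_mod_cast hcard
    _ = 3 ^ d * ∑ i ∈ r, c * (n i : ℝ≥0∞) ^ d := by rw [mul_left_comm, Finset.mul_sum]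
    _ ≤ 3 ^ d * ∑ i ∈ r, ∑ j ∈ boxAt i (n i), u j := by
        gcongr with i hi
        exact hsum i (hrs hi)
    _ ≤ 3 ^ d * ∑ j ∈ t, u j := by
        rw [← Finset.sum_biUnion hdisj]
        gcongr
        exact Finset.biUnion_subset.2 fun i hi => hnt i (hrs hi)

theorem mul_boxMean_indicator_le {u : (Fin d → ℤ) → ℝ≥0∞} {c : ℝ≥0∞} {N : ℕ}
    {s : Set (Fin d → ℤ)}
    (hs : ∀ i ∈ s, ∃ n ∈ Finset.Icc 1 N, c < boxMean (fun j => u (j + i)) n) :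
    c * boxMean (s.indicator 1) N ≤ 6 ^ d * boxMean u (2 * N) := by
  have hsum : c * ∑ j ∈ Fbox d N, s.indicator 1 j ≤ 3 ^ d * ∑ j ∈ Fbox d (2 * N), u j := by
    have hcard : ∑ j ∈ Fbox d N, s.indicator 1 j =
        (((Fbox d N).filter (· ∈ s)).card : ℝ≥0∞) := by
      rw [Finset.sum_indicator_eq_sum_filter]
      simp only [Pi.one_apply, Finset.sum_const, nsmul_eq_mul, mul_one]
    rw [hcard]
    refine mul_card_le_of_forall_le_sum_boxAt fun i hi => ?_
    obtain ⟨hiN, his⟩ := Finset.mem_filter.1 hi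
    obtain ⟨n, hn, hlt⟩ := hs i his
    obtain ⟨hn0, hnN⟩ := Finset.mem_Icc.1 hn
    refine ⟨n, hn0, fun j hj => mem_Fbox.2 fun k => ?_, ?_⟩
    · have hik := mem_Fbox.1 hiN k
      have hjk := mem_boxAt.1 hj k
      omega
    · rw [sum_boxAt, ← Nat.cast_pow, ← card_Fbox]
      exact ENNReal.mul_le_of_le_div hlt.le
  have hcard2 : ((Fbox d (2 * N)).card : ℝ≥0∞) = 2 ^ d * (Fbox d N).card := by
    simp only [card_Fbox, Nat.cast_pow, Nat.cast_mul, mul_pow, Nat.cast_ofNat]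
  calc c * boxMean (s.indicator 1) N = (c * ∑ j ∈ Fbox d N, s.indicator 1 j) / (Fbox d N).card :=
        (mul_div_assoc _ _ _).symm
    _ ≤ (3 ^ d * ∑ j ∈ Fbox d (2 * N), u j) / (Fbox d N).card := ENNReal.div_le_div_right hsum _
    _ = (2 ^ d * (3 ^ d * ∑ j ∈ Fbox d (2 * N), u j)) / (Fbox d (2 * N)).card := by
        rw [hcard2, ENNReal.mul_div_mul_left _ _ (pow_ne_zero d two_ne_zero)
          (ENNReal.pow_ne_top ENNReal.ofNat_ne_top)]
    _ = 6 ^ d * boxMean u (2 * N) := by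
        rw [← mul_assoc, ← mul_pow, mul_div_assoc, boxMean]
        norm_num

end Covering

variable {d : ℕ} [MeasurableSpace X] {μ : Measure X} {T : (Fin d → ℤ) → X → X}

theorem lintegral_comp_of_aemeasurable {Y : Type*} [MeasurableSpace Y] {ν : Measure Y} {g : X → Y}
    (hg : MeasurePreserving g μ ν) {h : Y → ℝ≥0∞} (hh : AEMeasurable h ν) :
    ∫⁻ x, h (g x) ∂μ = ∫⁻ y, h y ∂ν := by
  rw [← lintegral_map' (hg.map_eq.symm ▸ hh) hg.measurable.aemeasurable, hg.map_eq]

theorem aemeasurable_comp (hT : ∀ j, MeasurePreserving (T j) μ μ) {h : X → ℝ≥0∞}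
    (hh : AEMeasurable h μ) (j : Fin d → ℤ) : AEMeasurable (fun x => h (T j x)) μ :=
  hh.comp_quasiMeasurePreserving (hT j).quasiMeasurePreserving

theorem aemeasurable_boxMean (hT : ∀ j, MeasurePreserving (T j) μ μ) {h : X → ℝ≥0∞}
    (hh : AEMeasurable h μ) (n : ℕ) : AEMeasurable (fun x => boxMean (fun j => h (T j x)) n) μ :=
  (Finset.aemeasurable_fun_sum _ fun j _ => aemeasurable_comp hT hh j).div_const _

theorem lintegral_boxMean (hT : ∀ j, MeasurePreserving (T j) μ μ) {h : X → ℝ≥0∞}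
    (hh : AEMeasurable h μ) {n : ℕ} (hn : 0 < n) :
    ∫⁻ x, boxMean (fun j => h (T j x)) n ∂μ = ∫⁻ x, h x ∂μ := by
  simp only [boxMean, div_eq_mul_inv]
  rw [lintegral_mul_const'' _ (Finset.aemeasurable_fun_sum _ fun j _ => aemeasurable_comp hT hh j),
    lintegral_finsetSum' _ fun j _ => aemeasurable_comp hT hh j]
  simp only [lintegral_comp_of_aemeasurable (hT _) hh]
  exact boxMean_const hn _

theorem mul_measure_exists_le_lt_boxMean_le (hTadd : ∀ i j, T (i + j) = T i ∘ T j)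
    (hT : ∀ j, MeasurePreserving (T j) μ μ) {h : X → ℝ≥0∞} (hh : AEMeasurable h μ) (c : ℝ≥0∞)
    {N : ℕ} (hN : 0 < N) :
    c * μ {x | ∃ n ∈ Finset.Icc 1 N, c < boxMean (fun j => h (T j x)) n} ≤
      6 ^ d * ∫⁻ x, h x ∂μ := by
  set A : Set X := {x | ∃ n ∈ Finset.Icc 1 N, c < boxMean (fun j => h (T j x)) n}
  have hA : NullMeasurableSet A μ := by
    have hunion : A = ⋃ n ∈ Finset.Icc 1 N, {x | c < boxMean (fun j => h (T j x)) n} := by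
      ext x
      simp only [A, Set.mem_iUnion, Set.mem_ofPred_eq, exists_prop]
    rw [hunion]
    exact .biUnion (Finset.countable_toSet _) fun n _ =>
      nullMeasurableSet_lt aemeasurable_const (aemeasurable_boxMean hT hh n)
  have hind : AEMeasurable (A.indicator (1 : X → ℝ≥0∞)) μ := aemeasurable_one.indicator₀ hA
  have hpointwise (x : X) : c * boxMean (fun j => A.indicator 1 (T j x)) N ≤
      6 ^ d * boxMean (fun j => h (T j x)) (2 * N) := by
    refine mul_boxMean_indicator_le (s := {j | T j x ∈ A}) fun i ⟨n, hn, hlt⟩ => ⟨n, hn, ?_⟩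
    simpa only [hTadd, Function.comp_apply] using hlt
  calc c * μ A = c * ∫⁻ x, boxMean (fun j => A.indicator 1 (T j x)) N ∂μ := by
        rw [lintegral_boxMean hT hind hN, lintegral_indicator_one₀ hA]
    _ = ∫⁻ x, c * boxMean (fun j => A.indicator 1 (T j x)) N ∂μ :=
        (lintegral_const_mul'' _ (aemeasurable_boxMean hT hind N)).symm
    _ ≤ ∫⁻ x, 6 ^ d * boxMean (fun j => h (T j x)) (2 * N) ∂μ := lintegral_mono hpointwise
    _ = 6 ^ d * ∫⁻ x, h x ∂μ := by
        rw [lintegral_const_mul'' _ (aemeasurable_boxMean hT hh _),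
          lintegral_boxMean hT hh (Nat.mul_pos two_pos hN)]

theorem mul_measure_lt_upperMean_le (hTadd : ∀ i j, T (i + j) = T i ∘ T j)
    (hT : ∀ j, MeasurePreserving (T j) μ μ) {h : X → ℝ≥0∞} (hh : AEMeasurable h μ) (c : ℝ≥0∞) :
    c * μ {x | c < upperMean fun j => h (T j x)} ≤ 6 ^ d * ∫⁻ x, h x ∂μ := by
  set A : ℕ → Set X := fun N =>
    {x | ∃ n ∈ Finset.Icc 1 (N + 1), c < boxMean (fun j => h (T j x)) n}
  have hA : Monotone A := fun M N hMN x ⟨n, hn, hlt⟩ =>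
    ⟨n, Finset.Icc_subset_Icc_right (Nat.succ_le_succ hMN) hn, hlt⟩
  have hsub : {x | c < upperMean fun j => h (T j x)} ⊆ ⋃ N, A N := by
    intro x (hx : c < limsup _ _)
    obtain ⟨n, hlt, hn⟩ := ((frequently_lt_of_lt_limsup (by isBoundedDefault) hx).and_eventually
      (eventually_gt_atTop 0)).exists
    exact Set.mem_iUnion.2 ⟨n, n, Finset.mem_Icc.2 ⟨hn, n.le_succ⟩, hlt⟩
  calc c * μ {x | c < upperMean fun j => h (T j x)} ≤ c * μ (⋃ N, A N) := by gcongr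
    _ = ⨆ N, c * μ (A N) := by rw [hA.measure_iUnion, ENNReal.mul_iSup]
    _ ≤ 6 ^ d * ∫⁻ x, h x ∂μ :=
        iSup_le fun N => mul_measure_exists_le_lt_boxMean_le hTadd hT hh c N.succ_pos

theorem ae_lintegral_le_upperMean [IsProbabilityMeasure μ] (hTadd : ∀ i j, T (i + j) = T i ∘ T j)
    (hT : ∀ j, MeasurePreserving (T j) μ μ)
    (herg : ∀ A : Set X, MeasurableSet A → (∀ j, T j ⁻¹' A = A) → μ A = 0 ∨ μ A = 1)
    {q : X → ℝ≥0∞} (hq : Measurable q) {C : ℝ≥0} (hqC : ∀ x, q x ≤ C) :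
    ∀ᵐ x ∂μ, ∫⁻ z, q z ∂μ ≤ upperMean fun j => q (T j x) := by
  set L : X → ℝ≥0∞ := fun x => upperMean fun j => q (T j x)
  have hmean (n : ℕ) : Measurable fun x => boxMean (fun j => q (T j x)) n :=
    (Finset.measurable_fun_sum _ fun j _ => hq.comp (hT j).measurable).div_const _
  have hLinv (i : Fin d → ℤ) (x : X) : L (T i x) = L x := by
    simpa only [hTadd, Function.comp_apply] using
      upperMean_comp_add (u := fun j => q (T j x)) (fun j => hqC _) i
  have hconst (c : ℝ≥0∞) : ∫⁻ _, c ∂μ = c := by rw [lintegral_const, measure_univ, mul_one]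
  have hLC (x : X) : L x ≤ C := (upperMean_mono fun j => hqC _).trans (upperMean_const _).le
  have hLint : ∫⁻ z, q z ∂μ ≤ ∫⁻ x, L x ∂μ := by
    refine le_trans (le_of_eq ?_) (limsup_lintegral_le (fun _ => (C : ℝ≥0∞)) hmean
      (fun n => .of_forall fun x => boxMean_le (fun j => hqC _) n) ?_)
    · refine (limsup_const (f := atTop (α := ℕ)) _).symm.trans (limsup_congr ?_)
      filter_upwards [eventually_gt_atTop 0] with n hn
      rw [lintegral_boxMean hT hq.aemeasurable hn]
    · rw [hconst]
      exact ENNReal.coe_ne_top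
  have hset : MeasurableSet {x | L x < ∫⁻ z, q z ∂μ} :=
    measurableSet_lt (.limsup hmean) measurable_const
  rcases herg _ hset fun j => by ext x; simp only [Set.mem_preimage, Set.mem_ofPred_eq, hLinv]
    with h0 | h1
  · exact (measure_eq_zero_iff_ae_notMem.1 h0).mono fun x hx => not_lt.1 hx
  · have hlt : ∀ᵐ x ∂μ, L x < ∫⁻ z, q z ∂μ := (prob_compl_eq_zero_iff hset).2 h1
    have hLtop : ∫⁻ x, L x ∂μ ≠ ∞ :=
      ne_top_of_le_ne_top ENNReal.coe_ne_top ((lintegral_mono hLC).trans (hconst C).le)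
    have hcontra := lintegral_strict_mono (IsProbabilityMeasure.ne_zero μ) aemeasurable_const
      hLtop hlt
    rw [hconst] at hcontra
    exact absurd hcontra hLint.not_gt

end Ergodic

section MuEquicontinuity

open scoped ENNReal NNReal

/-- `D` becomes uniformly small near the diagonal once a set of small measure is discarded, the
common core of `MuMeanEquicont` (`D = dB T`) and `MuFMeanEquicont` (`D = rhoF T f`). The discarded
set may depend on `ε`, and it need not be measurable; see `IsMuEquicontinuous.exists_isCompact`. -/
def IsMuEquicontinuous [PseudoEMetricSpace X] [MeasurableSpace X] (μ : Measure X)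
    (D : X → X → ℝ≥0∞) : Prop :=
  ∀ τ ≠ 0, ∀ ε ≠ 0, ∃ M : Set X, μ Mᶜ ≤ τ ∧
    ∃ δ > 0, ∀ x ∈ M, ∀ y ∈ M, edist x y < δ → D x y ≤ ε

namespace IsMuEquicontinuous

section PseudoEMetricSpace

variable [PseudoEMetricSpace X] [MeasurableSpace X] {μ : Measure X} {D D' : X → X → ℝ≥0∞}

theorem zero : IsMuEquicontinuous μ 0 := fun _ _ _ _ =>
  ⟨Set.univ, by rw [Set.compl_univ, measure_empty]; exact zero_le, 1, one_pos,
    fun _ _ _ _ _ => zero_le⟩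

theorem add (hD : IsMuEquicontinuous μ D) (hD' : IsMuEquicontinuous μ D') :
    IsMuEquicontinuous μ (D + D') := by
  intro τ hτ ε hε
  obtain ⟨M, hM, δ, hδ, hclose⟩ := hD _ (ENNReal.half_pos hτ).ne' _ (ENNReal.half_pos hε).ne'
  obtain ⟨M', hM', δ', hδ', hclose'⟩ :=
    hD' _ (ENNReal.half_pos hτ).ne' _ (ENNReal.half_pos hε).ne'
  refine ⟨M ∩ M', ?_, min δ δ', lt_min hδ hδ', fun x hx y hy hxy => ?_⟩
  · rw [Set.compl_inter, ← ENNReal.add_halves τ]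
    exact (measure_union_le _ _).trans (add_le_add hM hM')
  · rw [← ENNReal.add_halves ε]
    exact add_le_add (hclose x hx.1 y hy.1 (hxy.trans_le (min_le_left _ _)))
      (hclose' x hx.2 y hy.2 (hxy.trans_le (min_le_right _ _)))

theorem const_mul (hD : IsMuEquicontinuous μ D) {c : ℝ≥0∞} (hc : c ≠ ∞) :
    IsMuEquicontinuous μ fun x y => c * D x y := by
  intro τ hτ ε hε
  obtain ⟨M, hM, δ, hδ, hclose⟩ := hD τ hτ (ε / c) (ENNReal.div_pos hε hc).ne'
  exact ⟨M, hM, δ, hδ, fun x hx y hy hxy =>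
    (mul_le_mul_right (hclose x hx y hy hxy) c).trans ENNReal.mul_div_le⟩

theorem sum {ι : Type*} {s : Finset ι} {D : ι → X → X → ℝ≥0∞}
    (hD : ∀ i ∈ s, IsMuEquicontinuous μ (D i)) : IsMuEquicontinuous μ (∑ i ∈ s, D i) :=
  Finset.sum_induction _ _ (fun _ _ => add) zero hD

theorem of_forall_le_add
    (h : ∀ τ ≠ 0, ∀ ε ≠ 0, ε ≠ ∞ → ∃ (B : Set X) (D' : X → X → ℝ≥0∞), μ Bᶜ ≤ τ ∧
      IsMuEquicontinuous μ D' ∧ ∀ x ∈ B, ∀ y ∈ B, D x y ≤ ε + D' x y) :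
    IsMuEquicontinuous μ D := by
  intro τ hτ ε hε
  obtain ⟨r, hr0, hrε⟩ := ENNReal.lt_iff_exists_nnreal_btwn.1 (ENNReal.half_pos hε)
  obtain ⟨B, D', hB, hD', hle⟩ := h _ (ENNReal.half_pos hτ).ne' r hr0.ne' ENNReal.coe_ne_top
  obtain ⟨M, hM, δ, hδ, hclose⟩ := hD' _ (ENNReal.half_pos hτ).ne' _ (ENNReal.half_pos hε).ne'
  refine ⟨B ∩ M, ?_, δ, hδ, fun x hx y hy hxy => ?_⟩
  · rw [Set.compl_inter, ← ENNReal.add_halves τ]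
    exact (measure_union_le _ _).trans (add_le_add hB hM)
  · rw [← ENNReal.add_halves ε]
    exact (hle x hx.1 y hy.1).trans (add_le_add hrε.le (hclose x hx.2 y hy.2 hxy))

theorem mono_ae {p : X → Prop} (hp : ∀ᵐ x ∂μ, p x) (h : ∀ x y, p x → p y → D x y ≤ D' x y)
    (hD' : IsMuEquicontinuous μ D') : IsMuEquicontinuous μ D :=
  of_forall_le_add fun _ _ _ _ _ => ⟨{x | p x}, D', (ae_iff.1 hp).trans_le zero_le, hD',
    fun x hx y hy => (h x y hx hy).trans le_add_self⟩

theorem mono (h : D ≤ D') (hD' : IsMuEquicontinuous μ D') : IsMuEquicontinuous μ D :=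
  mono_ae (p := fun _ => True) (.of_forall fun _ => trivial) (fun x y _ _ => h x y) hD'

theorem of_uniformContinuous {Y : Type*} [PseudoEMetricSpace Y] {g : X → Y}
    (hg : UniformContinuous g) : IsMuEquicontinuous μ fun x y => edist (g x) (g y) := by
  intro τ _ ε hε
  obtain ⟨δ, hδ, hclose⟩ := EMetric.uniformContinuous_iff.1 hg ε (pos_iff_ne_zero.2 hε)
  exact ⟨Set.univ, by rw [Set.compl_univ, measure_empty]; exact zero_le, δ, hδ,
    fun x _ y _ hxy => (hclose hxy).le⟩

end PseudoEMetricSpace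

theorem exists_isCompact [PseudoEMetricSpace X] [CompactSpace X] [MeasurableSpace X] [BorelSpace X]
    {μ : Measure X} [IsFiniteMeasure μ] {D : X → X → ℝ≥0∞} (hD : IsMuEquicontinuous μ D)
    {τ : ℝ≥0∞} (hτ : τ ≠ 0) :
    ∃ M : Set X, IsCompact M ∧ μ Mᶜ ≤ τ ∧
      ∀ ε ≠ 0, ∃ δ > 0, ∀ x ∈ M, ∀ y ∈ M, edist x y < δ → D x y ≤ ε := by
  have hτ2 : τ / 2 ≠ 0 := (ENNReal.half_pos hτ).ne'
  obtain ⟨t, ht, hsum⟩ := ENNReal.exists_pos_sum_of_countable' hτ2 ℕ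
  choose M hM δ hδ hclose using fun n : ℕ =>
    hD (t n) (ht n).ne' (n : ℝ≥0∞)⁻¹ (ENNReal.inv_ne_zero.2 (ENNReal.natCast_ne_top n))
  set B : Set X := ⋃ n, toMeasurable μ (M n)ᶜ
  have hB : μ B ≤ τ / 2 := calc
    μ B ≤ ∑' n, μ (toMeasurable μ (M n)ᶜ) := measure_iUnion_le _
    _ ≤ ∑' n, t n := ENNReal.tsum_le_tsum fun n => (measure_toMeasurable _).trans_le (hM n)
    _ ≤ τ / 2 := hsum.le
  have hBM (n : ℕ) : Bᶜ ⊆ M n := Set.compl_subset_comm.1 <|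
    (subset_toMeasurable μ _).trans (Set.subset_iUnion (fun n => toMeasurable μ (M n)ᶜ) n)
  obtain ⟨K, hKB, hKc, hK⟩ := (MeasurableSet.iUnion fun n => measurableSet_toMeasurable μ
    (M n)ᶜ).compl.exists_isClosed_sdiff_lt (measure_ne_top μ _) hτ2
  refine ⟨K, hKc.isCompact, ?_, fun ε hε => ?_⟩
  · calc μ Kᶜ ≤ μ (B ∪ Bᶜ \ K) := measure_mono fun x hx => or_iff_not_imp_left.2 fun h => ⟨h, hx⟩
      _ ≤ τ / 2 + τ / 2 := (measure_union_le _ _).trans (add_le_add hB hK.le)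
      _ = τ := ENNReal.add_halves τ
  · obtain ⟨n, hn⟩ := ENNReal.exists_inv_nat_lt hε
    exact ⟨δ n, hδ n, fun x hx y hy hxy =>
      (hclose n x (hBM n (hKB hx)) y (hBM n (hKB hy)) hxy).trans hn.le⟩

theorem of_integrable [PseudoEMetricSpace X] [CompactSpace X] [MeasurableSpace X] [BorelSpace X]
    {μ : Measure X} [IsFiniteMeasure μ] {E : Type*} [NormedAddCommGroup E] [NormedSpace ℝ E]
    {f : X → E} (hf : Integrable f μ) : IsMuEquicontinuous μ fun x y => edist (f x) (f y) := by
  refine of_forall_le_add fun τ hτ ε hε hεtop => ?_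
  have hε2 : ε / 2 ≠ 0 := (ENNReal.half_pos hε).ne'
  obtain ⟨g, hfg, -⟩ := hf.exists_boundedContinuous_lintegral_sub_le (mul_ne_zero hτ hε2)
  refine ⟨{x | ‖f x - g x‖ₑ < ε / 2}, fun x y => edist (g x) (g y), ?_,
    of_uniformContinuous (CompactSpace.uniformContinuous_of_continuous g.continuous),
    fun x (hx : ‖f x - g x‖ₑ < ε / 2) y (hy : ‖f y - g y‖ₑ < ε / 2) => ?_⟩
  · simp only [Set.compl_ofPred, not_lt]
    exact (meas_ge_le_lintegral_div (hf.aestronglyMeasurable.sub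
      g.continuous.aestronglyMeasurable).enorm hε2 (ENNReal.div_ne_top hεtop two_ne_zero)).trans
      (ENNReal.div_le_of_le_mul hfg)
  · have hx : edist (f x) (g x) ≤ ε / 2 := by
      rw [edist_eq_enorm_sub]; exact hx.le
    have hy : edist (g y) (f y) ≤ ε / 2 := by
      rw [edist_comm, edist_eq_enorm_sub]; exact hy.le
    calc edist (f x) (f y) ≤ edist (f x) (g x) + edist (g x) (g y) + edist (g y) (f y) :=
          edist_triangle4 _ _ _ _
      _ ≤ ε / 2 + edist (g x) (g y) + ε / 2 := by gcongr
      _ = ε + edist (g x) (g y) := by rw [add_right_comm, ENNReal.add_halves]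

end IsMuEquicontinuous

theorem isMuEquicontinuous_ofReal_iff [MetricSpace X] [CompactSpace X] [MeasurableSpace X]
    [BorelSpace X] {μ : Measure X} [IsProbabilityMeasure μ] {D : X → X → ℝ} :
    (IsMuEquicontinuous μ fun x y => ENNReal.ofReal (D x y)) ↔
      ∀ τ : ℝ, 0 < τ → ∃ M : Set X, IsCompact M ∧ 1 - ENNReal.ofReal τ ≤ μ M ∧
        ∀ ε : ℝ, 0 < ε → ∃ δ : ℝ, 0 < δ ∧ ∀ x ∈ M, ∀ y ∈ M, dist x y ≤ δ → D x y ≤ ε := by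
  refine ⟨fun h τ hτ => ?_, fun h τ hτ ε hε => ?_⟩
  · obtain ⟨M, hMc, hM, hclose⟩ := h.exists_isCompact (ENNReal.ofReal_pos.2 hτ).ne'
    refine ⟨M, hMc, ?_, fun ε hε => ?_⟩
    · rw [tsub_le_iff_right, ← prob_add_prob_compl (μ := μ) hMc.measurableSet]
      gcongr
    · obtain ⟨δ, hδ, hδε⟩ := hclose _ (ENNReal.ofReal_pos.2 hε).ne'
      obtain ⟨r, hr0, hrδ⟩ := ENNReal.lt_iff_exists_nnreal_btwn.1 hδ
      refine ⟨r, ENNReal.coe_pos.1 hr0, fun x hx y hy hxy => ?_⟩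
      exact (ENNReal.ofReal_le_ofReal_iff hε.le).1
        (hδε x hx y hy ((edist_le_coe.2 hxy).trans_lt hrδ))
  · obtain ⟨t, ht0, htτ⟩ := ENNReal.lt_iff_exists_nnreal_btwn.1 (pos_iff_ne_zero.2 hτ)
    obtain ⟨r, hr0, hrε⟩ := ENNReal.lt_iff_exists_nnreal_btwn.1 (pos_iff_ne_zero.2 hε)
    obtain ⟨M, hMc, hM, hclose⟩ := h t (ENNReal.coe_pos.1 ht0)
    obtain ⟨δ, hδ, hδr⟩ := hclose r (ENNReal.coe_pos.1 hr0)
    refine ⟨M, ?_, ENNReal.ofReal δ, ENNReal.ofReal_pos.2 hδ, fun x hx y hy hxy => ?_⟩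
    · rw [ENNReal.ofReal_coe_nnreal, tsub_le_iff_left] at hM
      rw [prob_compl_eq_one_sub hMc.measurableSet, tsub_le_iff_right]
      exact hM.trans (add_le_add_left htτ.le _)
    · exact (ENNReal.ofReal_le_of_le_toReal (hδr x hx y hy (edist_lt_ofReal.1 hxy).le)).trans
        hrε.le

end MuEquicontinuity

section OrbitMean

open scoped ENNReal NNReal

variable {d : ℕ} {T : (Fin d → ℤ) → X → X}

/-- The upper mean of a kernel `E` along the orbit of a pair of points. For `E = edist` this is the
Besicovitch pseudometric `dB T`, see `ofReal_dB`. -/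
def orbitMean (T : (Fin d → ℤ) → X → X) (E : X → X → ℝ≥0∞) (x y : X) : ℝ≥0∞ :=
  upperMean fun j => E (T j x) (T j y)

theorem orbitMean_le_add_add {E E' : X → X → ℝ≥0∞} {r : X → ℝ≥0∞}
    (h : ∀ a b, E a b ≤ r a + r b + E' a b) (x y : X) :
    orbitMean T E x y ≤
      (upperMean fun j => r (T j x)) + (upperMean fun j => r (T j y)) + orbitMean T E' x y :=
  calc orbitMean T E x y
      ≤ upperMean ((fun j => r (T j x)) + (fun j => r (T j y)) + fun j => E' (T j x) (T j y)) :=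
        upperMean_mono fun _ => h _ _
    _ ≤ _ := (upperMean_add_le _ _).trans (add_le_add_left (upperMean_add_le _ _) _)

theorem orbitMean_const_mul {c : ℝ≥0∞} (hc : c ≠ ∞) (E : X → X → ℝ≥0∞) :
    orbitMean T (fun a b => c * E a b) = fun x y => c * orbitMean T E x y :=
  funext₂ fun _ _ => upperMean_const_mul hc _

theorem orbitMean_sum_le {ι : Type*} (s : Finset ι) (E : ι → X → X → ℝ≥0∞) :
    orbitMean T (∑ i ∈ s, E i) ≤ ∑ i ∈ s, orbitMean T (E i) := by
  intro x y
  simp only [orbitMean, Finset.sum_apply]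
  refine (upperMean_mono fun j => ?_).trans (upperMean_sum_le s fun i j => E i (T j x) (T j y))
  rw [Finset.sum_apply]

theorem ofReal_dB [PseudoMetricSpace X] [CompactSpace X] (x y : X) :
    ENNReal.ofReal (dB T x y) = orbitMean T edist x y := by
  simp only [orbitMean, edist_dist]
  exact ofReal_limsup_sum_div_card (fun _ => dist_nonneg)
    fun _ => dist_le_diam_of_mem isBounded_of_compactSpace (Set.mem_univ _) (Set.mem_univ _)

theorem ofReal_rhoF_sq_le (f : X → ℂ) (x y : X) :
    ENNReal.ofReal (rhoF T f x y) ^ 2 ≤ orbitMean T (fun a b => edist (f a) (f b)) x y := by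
  by_contra! hlt
  obtain ⟨c, hc, hcρ⟩ := ENNReal.lt_iff_exists_nnreal_btwn.1 hlt
  set r : ℝ≥0 := NNReal.sqrt c
  have hrc : (r : ℝ≥0∞) ^ 2 = c := by rw [← ENNReal.coe_pow, NNReal.sq_sqrt]
  have hr : 0 < r := NNReal.sqrt_pos.2 (ENNReal.coe_pos.1 (bot_le.trans_lt hc))
  set S : Set (Fin d → ℤ) := {i | (r : ℝ) < ‖f (T i x) - f (T i y)‖}
  have hchebyshev : r * ENNReal.ofReal (upperDensity d S) < r * r := calc
    r * ENNReal.ofReal (upperDensity d S) = upperMean fun j => r * S.indicator 1 j := by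
        rw [ofReal_upperDensity, upperMean_const_mul ENNReal.coe_ne_top]
    _ ≤ orbitMean T (fun a b => edist (f a) (f b)) x y := by
        refine upperMean_mono fun j => ?_
        by_cases hj : j ∈ S
        · simp only [Set.indicator_of_mem hj, Pi.one_apply, mul_one, edist_dist, dist_eq_norm]
          exact (ENNReal.le_ofReal_iff_toReal_le ENNReal.coe_ne_top (norm_nonneg _)).2 (le_of_lt hj)
        · rw [Set.indicator_of_notMem hj, mul_zero]
          exact zero_le
    _ < r * r := by rwa [← sq, hrc]
  have hdensity : upperDensity d S < r := by
    rw [← ENNReal.ofReal_lt_ofReal_iff (NNReal.coe_pos.2 hr), ENNReal.ofReal_coe_nnreal]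
    exact lt_of_mul_lt_mul_left' hchebyshev
  have hρ : rhoF T f x y ≤ r := csInf_le ⟨0, fun _ h => h.1.le⟩ ⟨hr, hdensity⟩
  refine hcρ.not_ge ?_
  rw [← hrc, ← ENNReal.ofReal_coe_nnreal]
  gcongr

theorem edist_le_two_mul_of_norm_le {E : Type*} [SeminormedAddCommGroup E] {f : X → E} {C : ℝ≥0}
    (hf : ∀ x, ‖f x‖ ≤ C) (a b : X) : edist (f a) (f b) ≤ (2 * C : ℝ≥0) := by
  refine edist_le_coe.2 (NNReal.coe_le_coe.1 ?_)
  rw [coe_nndist, NNReal.coe_mul, NNReal.coe_two, two_mul]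
  exact (dist_le_norm_add_norm _ _).trans (add_le_add (hf _) (hf _))

theorem norm_indicator_const_one_le (B : Set X) (x : X) :
    ‖B.indicator (fun _ => (1 : ℂ)) x‖ ≤ (1 : ℝ≥0) :=
  (norm_indicator_le_norm_self _ x).trans norm_one.le

theorem orbitMean_edist_le_of_upperDensity_lt {f : X → ℂ} {C : ℝ≥0} (hf : ∀ x, ‖f x‖ ≤ C)
    {x y : X} {ε : ℝ} (hε : upperDensity d {i | ε < ‖f (T i x) - f (T i y)‖} < ε) :
    orbitMean T (fun a b => edist (f a) (f b)) x y ≤ (1 + 2 * C : ℝ≥0) * ENNReal.ofReal ε := by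
  set S : Set (Fin d → ℤ) := {i | ε < ‖f (T i x) - f (T i y)‖}
  set v : (Fin d → ℤ) → ℝ≥0∞ := fun j => (2 * C : ℝ≥0) * S.indicator 1 j
  have hv : upperMean v = (2 * C : ℝ≥0) * ENNReal.ofReal (upperDensity d S) := by
    rw [upperMean_const_mul ENNReal.coe_ne_top, ofReal_upperDensity]
  have hpointwise (j : Fin d → ℤ) :
      edist (f (T j x)) (f (T j y)) ≤ ENNReal.ofReal ε + v j := by
    by_cases hj : j ∈ S
    · simpa only [v, Set.indicator_of_mem hj, Pi.one_apply, mul_one] using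
        (edist_le_two_mul_of_norm_le hf _ _).trans le_add_self
    · rw [edist_dist, dist_eq_norm]
      exact (ENNReal.ofReal_le_ofReal (not_lt.1 hj)).trans le_self_add
  calc orbitMean T (fun a b => edist (f a) (f b)) x y
      ≤ upperMean ((fun _ => ENNReal.ofReal ε) + v) := upperMean_mono hpointwise
    _ ≤ ENNReal.ofReal ε + (2 * C : ℝ≥0) * ENNReal.ofReal ε := by
        refine (upperMean_add_le _ _).trans ?_
        rw [upperMean_const, hv]
        gcongr
    _ = (1 + 2 * C : ℝ≥0) * ENNReal.ofReal ε := by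
        rw [ENNReal.coe_add, ENNReal.coe_one, add_mul, one_mul]

theorem orbitMean_edist_le_mul_ofReal_rhoF {f : X → ℂ} {C : ℝ≥0} (hf : ∀ x, ‖f x‖ ≤ C) (x y : X) :
    orbitMean T (fun a b => edist (f a) (f b)) x y ≤
      (1 + 2 * C : ℝ≥0) * ENNReal.ofReal (rhoF T f x y) := by
  have hK : ((1 + 2 * C : ℝ≥0) : ℝ≥0∞) ≠ 0 := ENNReal.coe_ne_zero.2 (by positivity)
  have hne : {ε : ℝ | 0 < ε ∧ upperDensity d {i | ε < ‖f (T i x) - f (T i y)‖} < ε}.Nonempty :=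
    ⟨2, two_pos, (upperDensity_le_one _).trans_lt one_lt_two⟩
  rw [mul_comm, ← ENNReal.div_le_iff hK ENNReal.coe_ne_top]
  refine ENNReal.le_of_forall_pos_le_add fun η hη _ => ?_
  obtain ⟨ε, ⟨-, hε⟩, hlt⟩ :=
    exists_lt_of_csInf_lt hne (lt_add_of_pos_right _ (NNReal.coe_pos.2 hη))
  calc _ ≤ ENNReal.ofReal ε := by
        rw [ENNReal.div_le_iff hK ENNReal.coe_ne_top, mul_comm]
        exact orbitMean_edist_le_of_upperDensity_lt hf hε
    _ ≤ ENNReal.ofReal (rhoF T f x y + η) := ENNReal.ofReal_le_ofReal hlt.le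
    _ ≤ ENNReal.ofReal (rhoF T f x y) + η := by
        exact ENNReal.ofReal_add_le.trans_eq (by rw [ENNReal.ofReal_coe_nnreal])

section Measure

variable [PseudoEMetricSpace X] [MeasurableSpace X] {μ : Measure X}

theorem isMuEquicontinuous_orbitMean_of_forall_le_add (hTadd : ∀ i j, T (i + j) = T i ∘ T j)
    (hT : ∀ j, MeasurePreserving (T j) μ μ) {E : X → X → ℝ≥0∞}
    (h : ∀ ε ≠ 0, ∃ (r : X → ℝ≥0∞) (E' : X → X → ℝ≥0∞), AEMeasurable r μ ∧ ∫⁻ x, r x ∂μ ≤ ε ∧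
      IsMuEquicontinuous μ (orbitMean T E') ∧ ∀ a b, E a b ≤ r a + r b + E' a b) :
    IsMuEquicontinuous μ (orbitMean T E) := by
  refine .of_forall_le_add fun τ hτ ε hε hεtop => ?_
  have hε2 : ε / 2 ≠ 0 := (ENNReal.half_pos hε).ne'
  obtain ⟨r, E', hr, hrint, hE', hle⟩ := h (τ * (ε / 2) / 6 ^ d)
    (ENNReal.div_pos (mul_ne_zero hτ hε2) (ENNReal.pow_ne_top (by norm_num))).ne'
  refine ⟨{x | ε / 2 < upperMean fun j => r (T j x)}ᶜ, orbitMean T E', ?_, hE',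
    fun x hx y hy => ?_⟩
  · rw [compl_compl, ← ENNReal.mul_le_mul_iff_right hε2 (ENNReal.div_ne_top hεtop two_ne_zero)]
    calc ε / 2 * μ {x | ε / 2 < upperMean fun j => r (T j x)} ≤ 6 ^ d * ∫⁻ x, r x ∂μ :=
          mul_measure_lt_upperMean_le hTadd hT hr _
      _ ≤ 6 ^ d * (τ * (ε / 2) / 6 ^ d) := by gcongr
      _ ≤ ε / 2 * τ := ENNReal.mul_div_le.trans_eq (mul_comm _ _)
  · have hx : upperMean (fun j => r (T j x)) ≤ ε / 2 := not_lt.1 (by exact hx)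
    have hy : upperMean (fun j => r (T j y)) ≤ ε / 2 := not_lt.1 (by exact hy)
    rw [← ENNReal.add_halves ε]
    exact (orbitMean_le_add_add hle x y).trans (by gcongr)

end Measure

section ContinuousFunctions

variable [PseudoMetricSpace X] [CompactSpace X] [MeasurableSpace X] {μ : Measure X}
  [IsProbabilityMeasure μ]

theorem isMuEquicontinuous_orbitMean_edist_of_continuous (hTadd : ∀ i j, T (i + j) = T i ∘ T j)
    (hT : ∀ j, MeasurePreserving (T j) μ μ) (h : IsMuEquicontinuous μ (orbitMean T edist))
    {Y : Type*} [PseudoMetricSpace Y] {f : X → Y} (hf : Continuous f) :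
    IsMuEquicontinuous μ (orbitMean T fun a b => edist (f a) (f b)) := by
  refine isMuEquicontinuous_orbitMean_of_forall_le_add hTadd hT fun ε hε => ?_
  obtain ⟨δ, hδ, hfδ⟩ := EMetric.uniformContinuous_iff.1
    (CompactSpace.uniformContinuous_of_continuous hf) ε (pos_iff_ne_zero.2 hε)
  set D : ℝ≥0∞ := Metric.ediam (Set.range f)
  have hD : D ≠ ∞ := (isCompact_range hf).isBounded.ediam_ne_top
  have hK : D / δ ≠ ∞ := ENNReal.div_ne_top hD hδ.ne'
  refine ⟨fun _ => ε, fun a b => D / δ * edist a b, aemeasurable_const, ?_, ?_, fun a b => ?_⟩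
  · rw [lintegral_const, measure_univ, mul_one]
  · rw [orbitMean_const_mul hK]
    exact h.const_mul hK
  · rcases lt_or_ge (edist a b) δ with hab | hab
    · exact (hfδ hab).le.trans (le_self_add.trans le_self_add)
    · calc edist (f a) (f b) ≤ D :=
            Metric.edist_le_ediam_of_mem (Set.mem_range_self a) (Set.mem_range_self b)
        _ = D / δ * δ :=
            (ENNReal.div_mul_cancel hδ.ne' (ne_top_of_le_ne_top (edist_ne_top a b) hab)).symm
        _ ≤ ε + ε + D / δ * edist a b := (mul_le_mul_right hab _).trans le_add_self

theorem isMuEquicontinuous_orbitMean_edist_of_forall_continuous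
    (hTadd : ∀ i j, T (i + j) = T i ∘ T j) (hT : ∀ j, MeasurePreserving (T j) μ μ)
    (h : ∀ f : X → ℝ, Continuous f →
      IsMuEquicontinuous μ (orbitMean T fun a b => edist (f a) (f b))) :
    IsMuEquicontinuous μ (orbitMean T edist) := by
  refine isMuEquicontinuous_orbitMean_of_forall_le_add hTadd hT fun ε hε => ?_
  obtain ⟨t, ht, hcover⟩ := EMetric.totallyBounded_iff.1
    (isCompact_univ (X := X)).totallyBounded ε (pos_iff_ne_zero.2 hε)
  lift t to Finset X using ht
  set E : X → X → X → ℝ≥0∞ := fun p a b => edist (dist a p) (dist b p)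
  refine ⟨fun _ => ε, ∑ p ∈ t, E p, aemeasurable_const, ?_, ?_, fun a b => ?_⟩
  · rw [lintegral_const, measure_univ, mul_one]
  · exact .mono (orbitMean_sum_le t E)
      (.sum fun p _ => h (fun a => dist a p) (continuous_id.dist continuous_const))
  · obtain ⟨p, hp, hap⟩ := Set.mem_iUnion₂.1 (hcover (Set.mem_univ a))
    have hle : edist a p ≤ ε := le_of_lt hap
    have hbp : edist b p ≤ edist a p + E p a b := by
      simp only [E, edist_dist, ← ENNReal.ofReal_add dist_nonneg dist_nonneg]
      refine ENNReal.ofReal_le_ofReal ?_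
      rw [dist_comm (dist a p), Real.dist_eq]
      linarith only [le_abs_self (dist b p - dist a p)]
    calc edist a b ≤ edist a p + edist b p := edist_triangle_right a b p
      _ ≤ edist a p + (edist a p + E p a b) := by gcongr
      _ = edist a p + edist a p + E p a b := (add_assoc _ _ _).symm
      _ ≤ ε + ε + (∑ q ∈ t, E q) a b := by
          gcongr
          simp only [Finset.sum_apply]
          exact Finset.single_le_sum_of_canonicallyOrdered (f := fun q => E q a b) hp

end ContinuousFunctions

section MeanEquicontinuity

variable [MetricSpace X] [CompactSpace X] [MeasurableSpace X] [BorelSpace X] {μ : Measure X}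
  [IsProbabilityMeasure μ]

theorem muMeanEquicont_iff :
    MuMeanEquicont μ T ↔ IsMuEquicontinuous μ (orbitMean T edist) := by
  rw [show orbitMean T edist = fun x y => ENNReal.ofReal (dB T x y) from
    funext₂ fun x y => (ofReal_dB x y).symm, isMuEquicontinuous_ofReal_iff, MuMeanEquicont]

theorem muFMeanEquicont_of_isMuEquicontinuous {f : X → ℂ}
    (h : IsMuEquicontinuous μ (orbitMean T fun a b => edist (f a) (f b))) :
    MuFMeanEquicont μ T f := by
  refine isMuEquicontinuous_ofReal_iff.1 fun τ hτ ε hε => ?_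
  obtain ⟨M, hM, δ, hδ, hclose⟩ := h τ hτ (ε ^ 2) (pow_ne_zero 2 hε)
  exact ⟨M, hM, δ, hδ, fun x hx y hy hxy => (ENNReal.pow_le_pow_left_iff two_ne_zero).1
    ((ofReal_rhoF_sq_le f x y).trans (hclose x hx y hy hxy))⟩

theorem MuFMeanEquicont.isMuEquicontinuous {f : X → ℂ} (h : MuFMeanEquicont μ T f) {C : ℝ≥0}
    (hf : ∀ x, ‖f x‖ ≤ C) : IsMuEquicontinuous μ (orbitMean T fun a b => edist (f a) (f b)) :=
  .mono (fun x y => orbitMean_edist_le_mul_ofReal_rhoF hf x y)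
    ((isMuEquicontinuous_ofReal_iff.2 h).const_mul ENNReal.coe_ne_top)

end MeanEquicontinuity

end OrbitMean

section Koopman

open scoped ENNReal NNReal

variable {d : ℕ} [MeasurableSpace X] {μ : Measure X} {T : (Fin d → ℤ) → X → X}

/-- The Koopman representation of the action `T` on `L²(X, μ)`. The group `ℤ^d` is written
multiplicatively so that the representation is a monoid homomorphism. -/
def koopman (hTadd : ∀ i j, T (i + j) = T i ∘ T j) (hT : ∀ j, MeasurePreserving (T j) μ μ) :
    Multiplicative (Fin d → ℤ) →* (Lp ℂ 2 μ →ₗᵢ[ℂ] Lp ℂ 2 μ) :=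
  have hadd (i j : Fin d → ℤ) (g : Lp ℂ 2 μ) : Lp.compMeasurePreservingₗᵢ ℂ (T (i + j)) (hT _) g =
      Lp.compMeasurePreservingₗᵢ ℂ (T i) (hT i) (Lp.compMeasurePreservingₗᵢ ℂ (T j) (hT j) g) := by
    refine Lp.ext ((Lp.coeFn_compMeasurePreserving g (hT _)).trans
      (EventuallyEq.trans ?_ (Lp.coeFn_compMeasurePreserving _ (hT i)).symm))
    rw [add_comm, hTadd]
    exact (hT i).quasiMeasurePreserving.ae_eq_comp (Lp.coeFn_compMeasurePreserving g (hT j)).symm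
  { toFun := fun j => Lp.compMeasurePreservingₗᵢ ℂ (T j.toAdd) (hT _)
    map_one' := LinearIsometry.ext fun g =>
      (Lp.compMeasurePreservingₗᵢ ℂ (T 0) (hT 0)).injective
        ((hadd 0 0 g).symm.trans (by simp only [add_zero]; rfl))
    map_mul' := fun i j => LinearIsometry.ext (hadd i.toAdd j.toAdd) }

theorem coeFn_koopman (hTadd : ∀ i j, T (i + j) = T i ∘ T j)
    (hT : ∀ j, MeasurePreserving (T j) μ μ) (j : Fin d → ℤ) (g : Lp ℂ 2 μ) :
    koopman hTadd hT (.ofAdd j) g =ᵐ[μ] g ∘ T j :=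
  Lp.coeFn_compMeasurePreserving g (hT j)

theorem eLpNorm_two_sq_le_mul_lintegral {f : X → ℂ} {C : ℝ≥0} (hf : ∀ x, ‖f x‖ₑ ≤ C) :
    eLpNorm f 2 μ ^ 2 ≤ C * ∫⁻ x, ‖f x‖ₑ ∂μ := by
  calc eLpNorm f 2 μ ^ 2 = ∫⁻ x, ‖f x‖ₑ ^ 2 ∂μ := by
        simpa using eLpNorm_nnreal_pow_eq_lintegral (f := f) (μ := μ) (p := 2) two_ne_zero
    _ ≤ ∫⁻ x, C * ‖f x‖ₑ ∂μ := lintegral_mono fun x => by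
        rw [sq]
        exact mul_le_mul_left (hf x) _
    _ = C * ∫⁻ x, ‖f x‖ₑ ∂μ := lintegral_const_mul' _ _ ENNReal.coe_ne_top

theorem edist_koopman_toLp_sq_le (hTadd : ∀ i j, T (i + j) = T i ∘ T j)
    (hT : ∀ j, MeasurePreserving (T j) μ μ) {f : X → ℂ} (hf : MemLp f 2 μ) {C : ℝ≥0}
    (hfC : ∀ x, ‖f x‖ ≤ C) (i j : Multiplicative (Fin d → ℤ)) :
    edist (koopman hTadd hT i (hf.toLp f)) (koopman hTadd hT j (hf.toLp f)) ^ 2 ≤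
      (2 * C : ℝ≥0) * ∫⁻ x, edist (f (T i.toAdd x)) (f (T j.toAdd x)) ∂μ := by
  have hcomp (k : Multiplicative (Fin d → ℤ)) : koopman hTadd hT k (hf.toLp f) =
    (hf.comp_measurePreserving (hT k.toAdd)).toLp (f ∘ T k.toAdd) := rfl
  have hbound (x : X) : ‖(f ∘ T i.toAdd - f ∘ T j.toAdd) x‖ₑ ≤ (2 * C : ℝ≥0) := by
    rw [Pi.sub_apply, ← edist_eq_enorm_sub]
    exact edist_le_two_mul_of_norm_le hfC _ _
  rw [hcomp, hcomp, Lp.edist_toLp_toLp]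
  simpa only [edist_eq_enorm_sub, Pi.sub_apply, Function.comp_apply] using
    eLpNorm_two_sq_le_mul_lintegral hbound

end Koopman

section AlmostPeriodicFunctions

open scoped ENNReal NNReal

theorem exists_finset_forall_exists_edist_le [MeasurableSpace X] {μ : Measure X}
    [IsFiniteMeasure μ] {ι Y : Type*} [PseudoEMetricSpace Y] {T : ι → X → X}
    (hT : ∀ i, MeasurePreserving (T i) μ μ) {P : Set X} (hP : NullMeasurableSet P μ)
    (hP0 : μ P ≠ 0) {v : ι → Y} {ε : ℝ≥0∞}
    (h : ∀ i j, ∀ᵐ x ∂μ, T i x ∈ P → T j x ∈ P → edist (v i) (v j) ≤ ε) :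
    ∃ t : Finset ι, ∀ i, ∃ j ∈ t, edist (v i) (v j) ≤ ε := by
  by_contra! hsep
  obtain ⟨i, -, hi⟩ := exists_seq_of_forall_finset_exists (fun _ => True)
    (fun j i => ε < edist (v i) (v j)) fun t _ => (hsep t).imp fun _ hi => ⟨trivial, hi⟩
  have hi' {m n : ℕ} (hmn : m ≠ n) : ε < edist (v (i m)) (v (i n)) :=
    hmn.lt_or_gt.elim (fun hlt => edist_comm (v (i n)) _ ▸ hi m n hlt) (hi n m)
  have hdisjoint : Pairwise (Function.onFun (AEDisjoint μ) fun n => T (i n) ⁻¹' P) := fun m n hmn =>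
    measure_eq_zero_iff_ae_notMem.2 <| (h (i m) (i n)).mono
      fun x hx hmem => (hi' hmn).not_ge (hx hmem.1 hmem.2)
  have hfinite := Measure.finite_const_le_meas_of_disjoint_iUnion₀ μ (pos_iff_ne_zero.2 hP0)
    (fun n => hP.preimage (hT (i n)).quasiMeasurePreserving) hdisjoint (measure_ne_top μ _)
  refine Set.infinite_univ (hfinite.subset fun n _ => ?_)
  exact ((hT (i n)).measure_preimage hP).ge

theorem IsMuEquicontinuous.exists_measurableSet_forall_le [EMetricSpace X] [CompactSpace X]
    [MeasurableSpace X] [BorelSpace X] {μ : Measure X} [IsFiniteMeasure μ] (hμ : μ ≠ 0)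
    {D : X → X → ℝ≥0∞} (hD : IsMuEquicontinuous μ D) {ε : ℝ≥0∞} (hε : ε ≠ 0) :
    ∃ P, MeasurableSet P ∧ μ P ≠ 0 ∧ ∀ x ∈ P, ∀ y ∈ P, D x y ≤ ε := by
  have := EMetric.secondCountable_of_sigmaCompact X
  have huniv : μ Set.univ ≠ 0 := Measure.measure_univ_ne_zero.2 hμ
  obtain ⟨M, hMc, hM, hclose⟩ := hD.exists_isCompact (ENNReal.half_pos huniv).ne'
  obtain ⟨δ, hδ, hclose⟩ := hclose ε hε
  have hM0 : μ M ≠ 0 := by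
    intro h0
    rw [measure_compl hMc.measurableSet (measure_ne_top μ M), h0, tsub_zero] at hM
    exact (ENNReal.half_lt_self huniv (measure_ne_top μ _)).not_ge hM
  obtain ⟨p, -, hp⟩ := exists_mem_forall_mem_nhdsWithin_pos_measure hM0
  refine ⟨M ∩ Metric.eball p (δ / 2), hMc.measurableSet.inter Metric.isOpen_eball.measurableSet,
    (hp _ (inter_mem_nhdsWithin M (Metric.eball_mem_nhds p (ENNReal.half_pos hδ.ne')))).ne',
    fun x hx y hy => hclose x hx.1 y hy.1 ?_⟩
  calc edist x y ≤ edist x p + edist y p := edist_triangle_right x y p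
    _ < δ / 2 + δ / 2 := ENNReal.add_lt_add hx.2 hy.2
    _ = δ := ENNReal.add_halves δ

variable {d : ℕ} {T : (Fin d → ℤ) → X → X} [MeasurableSpace X] {μ : Measure X}
  [IsProbabilityMeasure μ]

theorem ae_lintegral_edist_le_orbitMean (hTadd : ∀ i j, T (i + j) = T i ∘ T j)
    (hT : ∀ j, MeasurePreserving (T j) μ μ)
    (herg : ∀ A : Set X, MeasurableSet A → (∀ j, T j ⁻¹' A = A) → μ A = 0 ∨ μ A = 1)
    {f : X → ℂ} (hf : Measurable f) {C : ℝ≥0} (hfC : ∀ x, ‖f x‖ ≤ C) (i j : Fin d → ℤ) :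
    ∀ᵐ x ∂μ, ∫⁻ z, edist (f (T i z)) (f (T j z)) ∂μ ≤
      orbitMean T (fun a b => edist (f a) (f b)) (T i x) (T j x) := by
  have hcomm (i j : Fin d → ℤ) (x : X) : T i (T j x) = T j (T i x) := by
    rw [← Function.comp_apply (f := T i), ← hTadd, add_comm, hTadd, Function.comp_apply]
  filter_upwards [ae_lintegral_le_upperMean hTadd hT herg
    ((hf.comp (hT i).measurable).edist (hf.comp (hT j).measurable))
    fun x => edist_le_two_mul_of_norm_le hfC _ _] with x hx
  simpa only [orbitMean, Function.comp_apply, hcomm i, hcomm j] using hx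

theorem isAlmostPeriodic_koopman_of_isMuEquicontinuous [EMetricSpace X] [CompactSpace X]
    [BorelSpace X] (hTadd : ∀ i j, T (i + j) = T i ∘ T j)
    (hT : ∀ j, MeasurePreserving (T j) μ μ)
    (herg : ∀ A : Set X, MeasurableSet A → (∀ j, T j ⁻¹' A = A) → μ A = 0 ∨ μ A = 1)
    {f : X → ℂ} (hf : Measurable f) {C : ℝ≥0} (hfC : ∀ x, ‖f x‖ ≤ C) (hf2 : MemLp f 2 μ)
    (h : IsMuEquicontinuous μ (orbitMean T fun a b => edist (f a) (f b))) :
    IsAlmostPeriodic (koopman hTadd hT) (hf2.toLp f) := by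
  refine EMetric.totallyBounded_iff.2 fun ε hε => ?_
  obtain ⟨r, hr, hrε⟩ := exists_between hε
  obtain ⟨P, hP, hP0, hPr⟩ := h.exists_measurableSet_forall_le (IsProbabilityMeasure.ne_zero μ)
    (ENNReal.div_pos (pow_ne_zero 2 hr.ne') (ENNReal.coe_ne_top (r := 2 * C))).ne'
  obtain ⟨t, ht⟩ := exists_finset_forall_exists_edist_le (ε := r)
    (T := fun i : Multiplicative (Fin d → ℤ) => T i.toAdd)
    (v := fun i => koopman hTadd hT i (hf2.toLp f)) (fun i => hT _) hP.nullMeasurableSet hP0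
    fun i j => by
      filter_upwards [ae_lintegral_edist_le_orbitMean hTadd hT herg hf hfC i.toAdd j.toAdd]
        with x hx hix hjx
      refine (ENNReal.pow_le_pow_left_iff two_ne_zero).1 ?_
      calc _ ≤ (2 * C : ℝ≥0) * ∫⁻ x, edist (f (T i.toAdd x)) (f (T j.toAdd x)) ∂μ :=
            edist_koopman_toLp_sq_le hTadd hT hf2 hfC i j
        _ ≤ (2 * C : ℝ≥0) * (r ^ 2 / (2 * C : ℝ≥0)) := by
            gcongr
            exact hx.trans (hPr _ hix _ hjx)
        _ ≤ r ^ 2 := ENNReal.mul_div_le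
  refine ⟨(fun i => koopman hTadd hT i (hf2.toLp f)) '' t, t.finite_toSet.image _, ?_⟩
  rintro _ ⟨i, rfl⟩
  obtain ⟨j, hj, hij⟩ := ht i
  exact Set.mem_iUnion₂.2 ⟨_, Set.mem_image_of_mem _ hj, hij.trans_lt hrε⟩

end AlmostPeriodicFunctions

section DiscreteSpectrum

open scoped ENNReal NNReal

variable {d : ℕ} {T : (Fin d → ℤ) → X → X} [MeasurableSpace X] {μ : Measure X}

theorem isEigenfunction_of_mem_jointEigenvectors (hTadd : ∀ i j, T (i + j) = T i ∘ T j)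
    (hT : ∀ j, MeasurePreserving (T j) μ μ) {g : Lp ℂ 2 μ}
    (hg : g ∈ jointEigenvectors (koopman hTadd hT)) (hg0 : g ≠ 0) : IsEigenfunction μ T g := by
  obtain ⟨χ, hχ⟩ := exists_character_of_mem_jointEigenvectors hg hg0
  obtain ⟨w, hw⟩ := exists_addChar_eq_exp (AddChar.toMonoidHomEquiv.symm χ)
  refine ⟨hg0, w, fun j => (coeFn_koopman hTadd hT j g).symm.trans ?_⟩
  rw [hχ, ← hw]
  exact Lp.coeFn_smul _ g

theorem hasDiscreteSpectrum_of_isAlmostPeriodic_total [PseudoMetricSpace X] [CompactSpace X]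
    [BorelSpace X] [IsFiniteMeasure μ] (hTadd : ∀ i j, T (i + j) = T i ∘ T j)
    (hT : ∀ j, MeasurePreserving (T j) μ μ)
    (htotal : ∀ g : Lp ℂ 2 μ,
      (∀ u, IsAlmostPeriodic (koopman hTadd hT) u → inner ℂ u g = 0) → g = 0) :
    HasDiscreteSpectrum μ T := by
  have : Fact ((2 : ℝ≥0∞) ≠ ∞) := ⟨ENNReal.ofNat_ne_top⟩
  obtain ⟨ι, b, hb⟩ := exists_hilbertBasis_of_isAlmostPeriodic_total htotal
  exact ⟨ι, b, fun i => isEigenfunction_of_mem_jointEigenvectors hTadd hT (hb i)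
    (b.orthonormal.ne_zero i)⟩

theorem hasDiscreteSpectrum_of_isMuEquicontinuous_edist [MetricSpace X] [CompactSpace X]
    [BorelSpace X] [IsProbabilityMeasure μ] (hTadd : ∀ i j, T (i + j) = T i ∘ T j)
    (hT : ∀ j, MeasurePreserving (T j) μ μ)
    (herg : ∀ A : Set X, MeasurableSet A → (∀ j, T j ⁻¹' A = A) → μ A = 0 ∨ μ A = 1)
    (h : IsMuEquicontinuous μ (orbitMean T edist)) : HasDiscreteSpectrum μ T := by
  refine hasDiscreteSpectrum_of_isAlmostPeriodic_total hTadd hT fun g hg => ?_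
  refine DenseRange.eq_zero_of_inner_left ℂ
    (ContinuousMap.toLp_denseRange ℂ μ ℂ (p := 2) ENNReal.ofNat_ne_top) fun f => ?_
  have hf : MemLp f 2 μ :=
    .of_bound f.continuous.aestronglyMeasurable ‖f‖ (.of_forall f.norm_coe_le_norm)
  have hfLp : ContinuousMap.toLp 2 μ ℂ f = hf.toLp f :=
    Lp.ext ((ContinuousMap.coeFn_toLp μ f).trans hf.coeFn_toLp.symm)
  rw [hfLp]
  exact inner_eq_zero_symm.1 (hg _ (isAlmostPeriodic_koopman_of_isMuEquicontinuous hTadd hT herg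
    f.continuous.measurable f.norm_coe_le_norm (C := ‖f‖₊) hf
    (isMuEquicontinuous_orbitMean_edist_of_continuous hTadd hT h f.continuous)))

theorem hasDiscreteSpectrum_of_isMuEquicontinuous_indicator [MetricSpace X] [CompactSpace X]
    [BorelSpace X] [IsProbabilityMeasure μ] (hTadd : ∀ i j, T (i + j) = T i ∘ T j)
    (hT : ∀ j, MeasurePreserving (T j) μ μ)
    (herg : ∀ A : Set X, MeasurableSet A → (∀ j, T j ⁻¹' A = A) → μ A = 0 ∨ μ A = 1)
    (h : ∀ B : Set X, MeasurableSet B → IsMuEquicontinuous μ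
      (orbitMean T fun a b => edist (B.indicator (fun _ => (1 : ℂ)) a)
        (B.indicator (fun _ => (1 : ℂ)) b))) :
    HasDiscreteSpectrum μ T := by
  refine hasDiscreteSpectrum_of_isAlmostPeriodic_total hTadd hT fun g hg => ?_
  refine (Lp.eq_zero_iff_ae_eq_zero).2 <| Lp.ae_eq_zero_of_forall_setIntegral_eq_zero g two_ne_zero
    ENNReal.ofNat_ne_top (fun B _ _ => ((Lp.memLp g).integrable one_le_two).integrableOn)
    fun B hB _ => ?_
  rw [← L2.inner_indicatorConstLp_one hB (measure_ne_top μ B) g]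
  exact hg _ (isAlmostPeriodic_koopman_of_isMuEquicontinuous hTadd hT herg
    (measurable_const.indicator hB) (norm_indicator_const_one_le B) _ (h B hB))

theorem IsEigenfunction.isMuEquicontinuous [PseudoEMetricSpace X] [CompactSpace X] [BorelSpace X]
    [IsFiniteMeasure μ] {g : Lp ℂ 2 μ} (hg : IsEigenfunction μ T g) :
    IsMuEquicontinuous μ (orbitMean T fun a b => edist (g a) (g b)) := by
  obtain ⟨-, w, hw⟩ := hg
  have hexp (j : Fin d → ℤ) :
      ‖Complex.exp (2 * Real.pi * Complex.I * ∑ k, (w k : ℂ) * (j k : ℂ))‖ = 1 := by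
    rw [show 2 * Real.pi * Complex.I * ∑ k, (w k : ℂ) * (j k : ℂ) =
      ((2 * Real.pi * ∑ k, w k * (j k : ℝ) : ℝ) : ℂ) * Complex.I by push_cast; ring]
    exact Complex.norm_exp_ofReal_mul_I _
  refine .mono_ae (ae_all_iff.2 hw) (fun x y hx hy => ?_)
    (.of_integrable ((Lp.memLp g).integrable one_le_two))
  refine ((upperMean_mono fun j => ?_).trans (upperMean_const _).le)
  have hx : g (T j x) = _ := hx j
  have hy : g (T j y) = _ := hy j
  simp only [hx, hy, edist_eq_enorm_sub, ← mul_sub, enorm_mul]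
  rw [← ofReal_norm (Complex.exp _), hexp, ENNReal.ofReal_one, one_mul]

theorem exists_lintegral_enorm_sub_sum_le [IsProbabilityMeasure μ] {𝕜 ι : Type*} [RCLike 𝕜]
    (b : HilbertBasis ι 𝕜 (Lp 𝕜 2 μ)) {f : X → 𝕜} (hf : MemLp f 2 μ) {ε : ℝ≥0∞} (hε : ε ≠ 0) :
    ∃ (s : Finset ι) (c : ι → 𝕜), ∫⁻ x, ‖f x - ∑ i ∈ s, c i * b i x‖ₑ ∂μ ≤ ε := by
  set c : ι → 𝕜 := fun i => b.repr (hf.toLp f) i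
  obtain ⟨s, hs⟩ := ((b.hasSum_repr (hf.toLp f)).eventually
    (Metric.eball_mem_nhds _ (pos_iff_ne_zero.2 hε))).exists
  have hsum : (∑ i ∈ s, c i • b i : Lp 𝕜 2 μ) =ᵐ[μ] fun x => ∑ i ∈ s, c i * b i x := by
    filter_upwards [Lp.coeFn_finsetSum s fun i => c i • b i,
      s.eventually_all.2 fun i _ => Lp.coeFn_smul (c i) (b i)] with x hx hsmul
    rw [hx, Finset.sum_apply]
    exact Finset.sum_congr rfl hsmul
  have hsub : ⇑(hf.toLp f - ∑ i ∈ s, c i • b i) =ᵐ[μ] fun x => f x - ∑ i ∈ s, c i * b i x := by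
    filter_upwards [Lp.coeFn_sub (hf.toLp f) (∑ i ∈ s, c i • b i), hf.coeFn_toLp, hsum]
      with x hx hfx hsx
    rw [hx, Pi.sub_apply, hfx, hsx]
  refine ⟨s, c, ?_⟩
  calc ∫⁻ x, ‖f x - ∑ i ∈ s, c i * b i x‖ₑ ∂μ
      = eLpNorm (hf.toLp f - ∑ i ∈ s, c i • b i : Lp 𝕜 2 μ) 1 μ := by
        rw [eLpNorm_congr_ae hsub, eLpNorm_one_eq_lintegral_enorm]
    _ ≤ eLpNorm (hf.toLp f - ∑ i ∈ s, c i • b i : Lp 𝕜 2 μ) 2 μ :=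
        eLpNorm_le_eLpNorm_of_exponent_le one_le_two (Lp.aestronglyMeasurable _)
    _ = edist (hf.toLp f) (∑ i ∈ s, c i • b i) := by
        rw [edist_eq_enorm_sub, Lp.enorm_def]
    _ ≤ ε := by
        rw [edist_comm]
        exact le_of_lt hs

theorem HasDiscreteSpectrum.isMuEquicontinuous [PseudoEMetricSpace X] [CompactSpace X]
    [BorelSpace X] [IsProbabilityMeasure μ] (hTadd : ∀ i j, T (i + j) = T i ∘ T j)
    (hT : ∀ j, MeasurePreserving (T j) μ μ) (h : HasDiscreteSpectrum μ T) {f : X → ℂ}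
    (hf : MemLp f 2 μ) : IsMuEquicontinuous μ (orbitMean T fun a b => edist (f a) (f b)) := by
  obtain ⟨ι, b, hb⟩ := h
  refine isMuEquicontinuous_orbitMean_of_forall_le_add hTadd hT fun ε hε => ?_
  obtain ⟨s, c, hsc⟩ := exists_lintegral_enorm_sub_sum_le b hf hε
  set g : X → ℂ := fun x => ∑ i ∈ s, c i * b i x
  set E : ι → X → X → ℝ≥0∞ := fun i x y => ‖c i‖ₑ * edist (b i x) (b i y)
  have hg : AEMeasurable g μ := Finset.aemeasurable_fun_sum _ fun i _ =>
    (Lp.aestronglyMeasurable (b i)).aemeasurable.const_mul (c i)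
  have hE : IsMuEquicontinuous μ (orbitMean T (∑ i ∈ s, E i)) := by
    refine .mono (orbitMean_sum_le s E) (.sum fun i _ => ?_)
    rw [orbitMean_const_mul enorm_ne_top]
    exact (hb i).isMuEquicontinuous.const_mul enorm_ne_top
  refine ⟨fun x => ‖f x - g x‖ₑ, ∑ i ∈ s, E i, (hf.1.aemeasurable.sub hg).enorm, hsc, hE,
    fun x y => ?_⟩
  have hgE : edist (g x) (g y) ≤ (∑ i ∈ s, E i) x y := by
    simp only [g, E, edist_eq_enorm_sub, ← Finset.sum_sub_distrib, ← mul_sub, Finset.sum_apply,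
      ← enorm_mul]
    exact enorm_sum_le _ _
  calc edist (f x) (f y) ≤ edist (f x) (g x) + edist (g x) (g y) + edist (f y) (g y) := by
        rw [edist_comm (f y)]
        exact edist_triangle4 _ _ _ _
    _ = ‖f x - g x‖ₑ + ‖f y - g y‖ₑ + edist (g x) (g y) := by
        rw [add_right_comm, edist_eq_enorm_sub (f x), edist_eq_enorm_sub (f y)]
    _ ≤ _ := by gcongr

theorem HasDiscreteSpectrum.isMuEquicontinuous_edist [PseudoMetricSpace X] [CompactSpace X]
    [BorelSpace X] [IsProbabilityMeasure μ] (hTadd : ∀ i j, T (i + j) = T i ∘ T j)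
    (hT : ∀ j, MeasurePreserving (T j) μ μ) (h : HasDiscreteSpectrum μ T) :
    IsMuEquicontinuous μ (orbitMean T edist) := by
  refine isMuEquicontinuous_orbitMean_edist_of_forall_continuous hTadd hT fun f hf => ?_
  obtain ⟨C, hC⟩ := (isCompact_range hf).isBounded.exists_norm_le
  have hf2 : MemLp (fun x => (f x : ℂ)) 2 μ :=
    .of_bound (Complex.continuous_ofReal.comp hf).aestronglyMeasurable C <| .of_forall fun x =>
      (Complex.norm_real _).trans_le (hC _ (Set.mem_range_self x))
  simpa only [Complex.isometry_ofReal.edist_eq] using h.isMuEquicontinuous hTadd hT hf2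

end DiscreteSpectrum

theorem stmt18_general {d : ℕ}
    [MetricSpace X] [CompactSpace X] [MeasurableSpace X] [BorelSpace X]
    (T : (Fin d → ℤ) → X → X)
    (hTadd : ∀ i j, T (i + j) = T i ∘ T j)
    (μ : Measure X) [IsProbabilityMeasure μ]
    (hT : ∀ j, MeasurePreserving (T j) μ μ)
    (herg : ∀ A : Set X, MeasurableSet A → (∀ j, T j ⁻¹' A = A) → μ A = 0 ∨ μ A = 1) :
    [MuMeanEquicont μ T,
     ∀ B : Set X, MeasurableSet B →
       MuFMeanEquicont μ T (B.indicator fun _ => (1 : ℂ)),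
     ∀ f : X → ℂ, MemLp f 2 μ → MuFMeanEquicont μ T f,
     HasDiscreteSpectrum μ T].TFAE := by
  tfae_have 1 → 4 := fun h =>
    hasDiscreteSpectrum_of_isMuEquicontinuous_edist hTadd hT herg (muMeanEquicont_iff.1 h)
  tfae_have 2 → 4 := fun h =>
    hasDiscreteSpectrum_of_isMuEquicontinuous_indicator hTadd hT herg fun B hB =>
      (h B hB).isMuEquicontinuous (norm_indicator_const_one_le B)
  tfae_have 3 → 2 := fun h B hB =>
    h _ (memLp_indicator_const 2 hB 1 (.inr (measure_ne_top μ B)))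
  tfae_have 4 → 3 := fun h f hf =>
    muFMeanEquicont_of_isMuEquicontinuous (h.isMuEquicontinuous hTadd hT hf)
  tfae_have 4 → 1 := fun h => muMeanEquicont_iff.2 (h.isMuEquicontinuous_edist hTadd hT)
  tfae_finish

/-- for a TDS with an ergodic invariant measure `μ`, the following are
equivalent: (1) `μ`-mean equicontinuity; (2) `μ-1_B`-mean equicontinuity for every Borel
`B`; (3) `μ-f`-mean equicontinuity for all `f ∈ L²(X,μ)`; (4) discrete spectrum. -/
theorem stmt18 {d : ℕ}
    [MetricSpace X] [CompactSpace X] [MeasurableSpace X] [BorelSpace X]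
    (T : (Fin d → ℤ) → X → X)
    (hTc : ∀ j, Continuous (T j))
    (hTadd : ∀ i j, T (i + j) = T i ∘ T j)
    (μ : Measure X) [IsProbabilityMeasure μ]
    (hT : ∀ j, MeasurePreserving (T j) μ μ)
    (herg : ∀ A : Set X, MeasurableSet A → (∀ j, T j ⁻¹' A = A) → μ A = 0 ∨ μ A = 1) :
    [MuMeanEquicont μ T,
     ∀ B : Set X, MeasurableSet B →
       MuFMeanEquicont μ T (B.indicator fun _ => (1 : ℂ)),
     ∀ f : X → ℂ, MemLp f 2 μ → MuFMeanEquicont μ T f,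
     HasDiscreteSpectrum μ T].TFAE :=
  stmt18_general T hTadd μ hT herg
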